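/- arXiv:2108.13569 — 3 statements merged into one kernel-verified Lean document; each statement's English description precedes it below -/
import Mathlib

section
/- Let P₁,…,P_d be a strongly separated family of polytopes in ℝ^d whose union is affinely spanning (the affine span of P₁ ∪ ⋯ ∪ P_d is all of ℝ^d). Then there exist two distinct affine hyperplanes, given by pairs (u₁,α₁) and (u₂,α₂) with {x : ⟨u₁,x⟩ = α₁} ≠ {x : ⟨u₂,x⟩ = α₂}, each of which is tangent to every Pᵢ and contains every Pᵢ in its closed nonnegative side: for j = 1,2 and every i, H_{uⱼ,αⱼ} ∩ Pᵢ ≠ ∅ and Pᵢ ⊆ {x : ⟨uⱼ,x⟩ ≥ αⱼ}. -/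
open scoped InnerProductSpace

/-- A family of sets in `ℝ^d` is strongly separated if every subset of indices can be
strictly separated from its complement by an affine hyperplane. -/
def StronglySeparated {d m : ℕ} (S : Fin m → Set (EuclideanSpace ℝ (Fin d))) : Prop :=
  ∀ I : Finset (Fin m), ∃ (u : EuclideanSpace ℝ (Fin d)) (α : ℝ), u ≠ 0 ∧
    (∀ i ∈ I, ∀ x ∈ S i, ⟪u, x⟫_ℝ < α) ∧ (∀ i, i ∉ I → ∀ x ∈ S i, α < ⟪u, x⟫_ℝ)

/-!
Homogenize, replacing each polytope in `V` by the cone over it in `V × ℝ`. Strong separation makes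
every transversal of the cones linearly independent, so each transversal spans a hyperplane, which a
fixed volume form `ω` orients. A point keeps its side while a transversal moves continuously without
its hyperplane meeting that point; hence if `x` supports the family with a vertex `v` removed from
one member and `y` supports the family with that member shrunk to `v`, then `x` or `y` supports the
whole family, and induction on the vertex sets gives a transversal with everything on its
nonnegative side. Doing this for `ω` and for `-ω` gives the two tangents: if they coincided, each
polytope would lie on both sides of the common hyperplane, hence inside it, against the spanning
hypothesis.
-/

/-- A family of sets in a real vector space has independent transversals if every choice of one
vector from each member is linearly independent. Applied to the cones over a strongly separated
family of polytopes, it says that every transversal of the polytopes spans a hyperplane. -/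
def HasIndependentTransversals {ι E : Type*} [AddCommGroup E] [Module ℝ E]
    (K : ι → Set E) : Prop :=
  ∀ x : ι → E, (∀ i, x i ∈ K i) → LinearIndependent ℝ x

theorem linearIndependent_of_forall_exists_neg_pos {ι R M : Type*} [Ring R] [LinearOrder R]
    [IsStrictOrderedRing R] [AddCommGroup M] [Module R M] {y : ι → M}
    (hy : ∀ I : Finset ι, ∃ f : M →ₗ[R] R, (∀ i ∈ I, f (y i) < 0) ∧ ∀ i ∉ I, 0 < f (y i)) :
    LinearIndependent R y := by
  rw [linearIndependent_iff']
  intro s c hc i hi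
  obtain ⟨f, hneg, hpos⟩ := hy {j ∈ s | 0 < c j}
  have hle : ∀ j ∈ s, c j * f (y j) ≤ 0 := by
    intro j hj
    rcases lt_or_ge 0 (c j) with hcj | hcj
    · exact mul_nonpos_of_nonneg_of_nonpos hcj.le (hneg j (by simp [hj, hcj])).le
    · exact mul_nonpos_of_nonpos_of_nonneg hcj (hpos j (by simp [hcj.not_gt])).le
  have hsum : ∑ j ∈ s, c j * f (y j) = 0 := by
    simpa only [map_sum, map_smul, smul_eq_mul, map_zero] using congrArg f hc
  have hfi : f (y i) ≠ 0 := by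
    by_cases hmem : i ∈ ({j ∈ s | 0 < c j} : Finset ι)
    · exact (hneg i hmem).ne
    · exact (hpos i hmem).ne'
  exact (mul_eq_zero.mp ((Finset.sum_eq_zero_iff_of_nonpos hle).mp hsum i hi)).resolve_right hfi

section HyperplaneForm

variable {n : ℕ} {E : Type*} [AddCommGroup E] [Module ℝ E]

/-- The linear form `z ↦ ω (z, x₁, …, xₙ)`, the analogue of the cross product of `x₁, …, xₙ`. For
linearly independent `x` and a volume form `ω` on an `(n + 1)`-dimensional space, its kernel is the
hyperplane spanned by `x`, and the order of `x` and the sign of `ω` fix its positive side. -/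
def hyperplaneForm (ω : E [⋀^Fin (n + 1)]→ₗ[ℝ] ℝ) (x : Fin n → E) : E →ₗ[ℝ] ℝ where
  toFun z := ω.curryLeft z x
  map_add' z z' := by rw [map_add, AlternatingMap.add_apply]
  map_smul' c z := by rw [map_smul, AlternatingMap.smul_apply, RingHom.id_apply]

theorem hyperplaneForm_apply (ω : E [⋀^Fin (n + 1)]→ₗ[ℝ] ℝ) (x : Fin n → E) (z : E) :
    hyperplaneForm ω x z = ω (Fin.cons z x) :=
  rfl

theorem hyperplaneForm_neg (ω : E [⋀^Fin (n + 1)]→ₗ[ℝ] ℝ) (x : Fin n → E) :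
    hyperplaneForm (-ω) x = -hyperplaneForm ω x :=
  rfl

theorem hyperplaneForm_apply_self (ω : E [⋀^Fin (n + 1)]→ₗ[ℝ] ℝ) (x : Fin n → E) (i : Fin n) :
    hyperplaneForm ω x (x i) = 0 :=
  ω.map_eq_zero_of_eq _ (by rw [Fin.cons_zero, Fin.cons_succ]) (Fin.succ_ne_zero i).symm

theorem continuous_hyperplaneForm_lineMap (ω : E [⋀^Fin (n + 1)]→ₗ[ℝ] ℝ)
    (hdim : Module.finrank ℝ E = n + 1) (x y : Fin n → E) (z : E) :
    Continuous fun t : ℝ => hyperplaneForm ω (AffineMap.lineMap x y t) z := by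
  have := FiniteDimensional.of_finrank_eq_succ hdim
  let b := Module.finBasisOfFinrankEq ℝ E hdim
  have hcoord : Continuous fun t : ℝ =>
      b.toMatrix (Fin.cons z (AffineMap.lineMap x y t) : Fin (n + 1) → E) := by
    refine continuous_matrix fun i j => Fin.cases ?_ (fun j => ?_) j
    · simp only [Module.Basis.toMatrix_apply, Fin.cons_zero]
      exact continuous_const
    · simp only [Module.Basis.toMatrix_apply, Fin.cons_succ, AffineMap.lineMap_apply_module,
        Pi.add_apply, Pi.smul_apply, map_add, map_smul, Finsupp.add_apply, Finsupp.smul_apply]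
      fun_prop
  simp only [hyperplaneForm_apply]
  rw [ω.eq_smul_basis_det b]
  exact hcoord.matrix_det.const_smul (ω b)

variable {ω : E [⋀^Fin (n + 1)]→ₗ[ℝ] ℝ}

theorem alternatingMap_apply_ne_zero_of_linearIndependent
    (hdim : Module.finrank ℝ E = n + 1) (hω : ω ≠ 0) {v : Fin (n + 1) → E}
    (hv : LinearIndependent ℝ v) : ω v ≠ 0 := by
  have := FiniteDimensional.of_finrank_eq_succ hdim
  let b := basisOfLinearIndependentOfCardEqFinrank hv (by rw [Fintype.card_fin, hdim])
  rw [← coe_basisOfLinearIndependentOfCardEqFinrank hv (by rw [Fintype.card_fin, hdim])]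
  exact (ω.map_basis_ne_zero_iff b).mpr hω

theorem hyperplaneForm_ne_zero (hdim : Module.finrank ℝ E = n + 1) (hω : ω ≠ 0) {x : Fin n → E}
    (hx : LinearIndependent ℝ x) : hyperplaneForm ω x ≠ 0 := by
  obtain ⟨z, hz⟩ := exists_linearIndependent_cons_of_lt_finrank hx (by omega)
  intro h
  exact alternatingMap_apply_ne_zero_of_linearIndependent hdim hω hz (LinearMap.congr_fun h z)

theorem hyperplaneForm_apply_ne_zero (hdim : Module.finrank ℝ E = n + 1) (hω : ω ≠ 0)
    {x : Fin n → E} (hx : LinearIndependent ℝ x) {f : E →ₗ[ℝ] ℝ} (hfx : ∀ i, f (x i) = 0)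
    {z : E} (hfz : f z ≠ 0) : hyperplaneForm ω x z ≠ 0 := by
  have hspan : Submodule.span ℝ (Set.range x) ≤ LinearMap.ker f :=
    Submodule.span_le.mpr (Set.range_subset_iff.mpr hfx)
  exact alternatingMap_apply_ne_zero_of_linearIndependent hdim hω
    (linearIndependent_finCons.mpr ⟨hx, fun hz => hfz (hspan hz)⟩)

theorem mul_pos_of_continuous_of_ne_zero {X : Type*} [TopologicalSpace X] [PreconnectedSpace X]
    {φ : X → ℝ} (hφ : Continuous φ) (hne : ∀ x, φ x ≠ 0) (a b : X) : 0 < φ a * φ b := by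
  by_contra! h
  have hzero : (0 : ℝ) ∈ Set.range φ := by
    rcases mul_nonpos_iff.mp h with ⟨ha, hb⟩ | ⟨ha, hb⟩
    · exact mem_range_of_exists_le_of_exists_ge hφ ⟨b, hb⟩ ⟨a, ha⟩
    · exact mem_range_of_exists_le_of_exists_ge hφ ⟨a, ha⟩ ⟨b, hb⟩
  obtain ⟨x, hx⟩ := hzero
  exact hne x hx

/- The forms `(1 - t) • f - t • g` vanish on the segment from `x` to `y` but never at `z`, so `z`
stays off the moving hyperplane spanned by that segment and cannot change sides. -/
theorem hyperplaneForm_mul_pos_of_segment (hdim : Module.finrank ℝ E = n + 1) (hω : ω ≠ 0)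
    {K : Fin n → Set E} (hconv : ∀ i, Convex ℝ (K i)) (hK : HasIndependentTransversals K)
    {x y : Fin n → E} (hx : ∀ i, x i ∈ K i) (hy : ∀ i, y i ∈ K i) {f g : E →ₗ[ℝ] ℝ}
    (hfx : ∀ i, f (x i) = 0) (hgy : ∀ i, g (y i) = 0) (hfg : ∀ i, f (y i) = g (x i))
    {z : E} (hz : f z * g z < 0) : 0 < hyperplaneForm ω x z * hyperplaneForm ω y z := by
  have hne : ∀ t : unitInterval,
      hyperplaneForm ω (AffineMap.lineMap x y (t : ℝ)) z ≠ 0 := by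
    rintro ⟨t, ht⟩
    have hmem : ∀ i, AffineMap.lineMap x y t i ∈ K i := fun i =>
      (hconv i).lineMap_mem (hx i) (hy i) ht
    have hvanish : ∀ i, ((1 - t) • f - t • g) (AffineMap.lineMap x y t i) = 0 := by
      intro i
      simp only [AffineMap.lineMap_apply_module, Pi.add_apply, Pi.smul_apply, map_add, map_smul,
        LinearMap.sub_apply, LinearMap.smul_apply, smul_eq_mul, hfx, hgy, hfg]
      ring
    have hside : ((1 - t) • f - t • g) z ≠ 0 := by
      simp only [LinearMap.sub_apply, LinearMap.smul_apply, smul_eq_mul]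
      intro h
      have hsq : (1 - t) * f z ^ 2 + t * g z ^ 2 = f z * g z := by
        linear_combination (f z - g z) * h
      have := mul_nonneg (sub_nonneg.mpr ht.2) (sq_nonneg (f z))
      have := mul_nonneg ht.1 (sq_nonneg (g z))
      linarith
    exact hyperplaneForm_apply_ne_zero hdim hω (hK _ hmem) hvanish hside
  simpa only [Function.comp_apply, Set.Icc.coe_zero, Set.Icc.coe_one,
      AffineMap.lineMap_apply_zero, AffineMap.lineMap_apply_one] using
    mul_pos_of_continuous_of_ne_zero
      ((continuous_hyperplaneForm_lineMap ω hdim x y z).comp continuous_subtype_val) hne 0 1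

theorem hyperplaneForm_mul_pos_of_mem_ker (hdim : Module.finrank ℝ E = n + 1) (hω : ω ≠ 0)
    {K : Fin n → Set E} (hconv : ∀ i, Convex ℝ (K i)) (hK : HasIndependentTransversals K)
    {x y : Fin n → E} (hx : ∀ i, x i ∈ K i) (hy : ∀ i, y i ∈ K i) {f : E →ₗ[ℝ] ℝ}
    (hfx : ∀ i, f (x i) = 0) (hfy : ∀ i, f (y i) = 0) {z : E} (hz : f z ≠ 0) :
    0 < hyperplaneForm ω x z * hyperplaneForm ω y z := by
  refine hyperplaneForm_mul_pos_of_segment hdim hω hconv hK hx hy hfx (g := -f)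
    (fun i => ?_) (fun i => ?_) ?_
  · rw [LinearMap.neg_apply, hfy, neg_zero]
  · rw [LinearMap.neg_apply, hfx, hfy, neg_zero]
  · rw [LinearMap.neg_apply, mul_neg, neg_lt_zero]
    exact mul_self_pos.mpr hz

theorem exists_mem_convexCone_apply_eq (C : ConvexCone ℝ E) {f g : E →ₗ[ℝ] ℝ} {x y : E}
    (hx : x ∈ C) (hy : y ∈ C) (hfx : f x = 0) (hgy : g y = 0) (hfg : 0 ≤ f y * g x) :
    ∃ x' ∈ C, ∃ y' ∈ C, f x' = 0 ∧ g y' = 0 ∧ f y' = g x' := by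
  rcases hfg.eq_or_lt with h | h
  · rcases mul_eq_zero.mp h.symm with hfy | hgx
    · exact ⟨y, hy, y, hy, hfy, hgy, hfy.trans hgy.symm⟩
    · exact ⟨x, hx, x, hx, hfx, hgx, hfx.trans hgx.symm⟩
  · have hgx : g x ≠ 0 := right_ne_zero_of_mul h.ne'
    have hscale : 0 < f y / g x := by
      rw [← mul_div_mul_right (f y) (g x) hgx]
      exact div_pos h (mul_self_pos.mpr hgx)
    refine ⟨(f y / g x) • x, C.smul_mem hscale hx, y, hy, ?_, hgy, ?_⟩
    · rw [map_smul, hfx, smul_zero]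
    · rw [map_smul, smul_eq_mul, div_mul_cancel₀ _ hgx]

theorem hyperplaneForm_mul_pos_of_mul_nonneg (hdim : Module.finrank ℝ E = n + 1) (hω : ω ≠ 0)
    {C : Fin n → ConvexCone ℝ E} (hC : HasIndependentTransversals fun i => (C i : Set E))
    {x y : Fin n → E} (hx : ∀ i, x i ∈ C i) (hy : ∀ i, y i ∈ C i) {f g : E →ₗ[ℝ] ℝ}
    (hfx : ∀ i, f (x i) = 0) (hgy : ∀ i, g (y i) = 0) (hfg : ∀ i, 0 ≤ f (y i) * g (x i))
    {z : E} (hz : f z * g z < 0) : 0 < hyperplaneForm ω x z * hyperplaneForm ω y z := by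
  choose x' hx' y' hy' hfx' hgy' hfg' using fun i =>
    exists_mem_convexCone_apply_eq (C i) (hx i) (hy i) (hfx i) (hgy i) (hfg i)
  have hconv : ∀ i, Convex ℝ (C i : Set E) := fun i => (C i).convex
  have hxx' : 0 < hyperplaneForm ω x z * hyperplaneForm ω x' z :=
    hyperplaneForm_mul_pos_of_mem_ker hdim hω hconv hC hx hx' hfx hfx'
      (left_ne_zero_of_mul hz.ne)
  have hx'y' : 0 < hyperplaneForm ω x' z * hyperplaneForm ω y' z :=
    hyperplaneForm_mul_pos_of_segment hdim hω hconv hC hx' hy' hfx' hgy' hfg' hz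
  have hy'y : 0 < hyperplaneForm ω y' z * hyperplaneForm ω y z :=
    hyperplaneForm_mul_pos_of_mem_ker hdim hω hconv hC hy' hy hgy' hgy
      (right_ne_zero_of_mul hz.ne)
  refine pos_of_mul_pos_left ?_
    (mul_self_nonneg (hyperplaneForm ω x' z * hyperplaneForm ω y' z))
  convert mul_pos (mul_pos hxx' hx'y') hy'y using 1
  ring

theorem exists_mem_apply_eq_zero_of_convex {s : Set E} (hs : Convex ℝ s) {f : E →ₗ[ℝ] ℝ}
    {v a : E} (hv : v ∈ s) (ha : a ∈ s) (hfv : f v < 0) (hfa : 0 ≤ f a) {g : E →ₗ[ℝ] ℝ}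
    (hgv : g v = 0) (hga : g a < 0) : ∃ b ∈ s, f b = 0 ∧ g b < 0 := by
  have hpos : 0 < f a + -f v := by linarith
  refine ⟨_, convex_iff_div.mp hs hv ha hfa (neg_nonneg.mpr hfv.le) hpos, ?_, ?_⟩
  · simp only [map_add, map_smul, smul_eq_mul]
    ring
  · simp only [map_add, map_smul, smul_eq_mul, hgv, mul_zero, zero_add]
    exact mul_neg_of_pos_of_neg (div_pos (neg_pos.mpr hfv) hpos) hga

/-- A transversal `x` of the finite sets `V i` is supporting for `ω` if the hyperplane it spans
has all of the sets on its closed nonnegative side, as oriented by `ω`. -/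
def IsSupportingTransversal (ω : E [⋀^Fin (n + 1)]→ₗ[ℝ] ℝ) (V : Fin n → Finset E)
    (x : Fin n → E) : Prop :=
  (∀ i, x i ∈ V i) ∧ ∀ i, ∀ v ∈ V i, 0 ≤ hyperplaneForm ω x v

theorem hyperplaneForm_nonneg_or_nonneg (hdim : Module.finrank ℝ E = n + 1) (hω : ω ≠ 0)
    {C : Fin n → ConvexCone ℝ E} (hC : HasIndependentTransversals fun i => (C i : Set E))
    {x y : Fin n → E} (hx : ∀ i, x i ∈ C i) (hy : ∀ i, y i ∈ C i) (i₀ : Fin n)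
    (hxy : ∀ i ≠ i₀, 0 ≤ hyperplaneForm ω x (y i)) (hyx : ∀ i ≠ i₀, 0 ≤ hyperplaneForm ω y (x i))
    {a : E} (ha : a ∈ C i₀) (hxa : 0 ≤ hyperplaneForm ω x a) :
    0 ≤ hyperplaneForm ω x (y i₀) ∨ 0 ≤ hyperplaneForm ω y a := by
  by_contra! h
  obtain ⟨hxv, hya⟩ := h
  obtain ⟨b, hb, hxb, hyb⟩ := exists_mem_apply_eq_zero_of_convex (C i₀).convex (hy i₀) ha hxv hxa
    (hyperplaneForm_apply_self ω y i₀) hya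
  let x' := Function.update x i₀ b
  have hx' : ∀ i, x' i ∈ C i :=
    (Function.forall_update_iff x fun i p => p ∈ C i).mpr ⟨hb, fun i _ => hx i⟩
  have hxx' : ∀ i, hyperplaneForm ω x (x' i) = 0 :=
    (Function.forall_update_iff x fun _ p => hyperplaneForm ω x p = 0).mpr
      ⟨hxb, fun i _ => hyperplaneForm_apply_self ω x i⟩
  have hsame : ∀ i, 0 ≤ hyperplaneForm ω x (y i) * hyperplaneForm ω y (x' i) :=
    (Function.forall_update_iff x
      fun i p => 0 ≤ hyperplaneForm ω x (y i) * hyperplaneForm ω y p).mpr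
      ⟨(mul_pos_of_neg_of_neg hxv hyb).le, fun i hi => mul_nonneg (hxy i hi) (hyx i hi)⟩
  have hxz : 0 < hyperplaneForm ω x (a - y i₀) := by rw [map_sub]; linarith
  have hyz : hyperplaneForm ω y (a - y i₀) < 0 := by
    rwa [map_sub, hyperplaneForm_apply_self, sub_zero]
  have hpos : 0 < hyperplaneForm ω x (a - y i₀) * hyperplaneForm ω x' (a - y i₀) :=
    hyperplaneForm_mul_pos_of_mem_ker hdim hω (fun i => (C i).convex) hC hx hx'
      (hyperplaneForm_apply_self ω x) hxx' hxz.ne'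
  have hneg : 0 < hyperplaneForm ω x' (a - y i₀) * hyperplaneForm ω y (a - y i₀) :=
    hyperplaneForm_mul_pos_of_mul_nonneg hdim hω hC hx' hy hxx'
      (hyperplaneForm_apply_self ω y) hsame (mul_neg_of_pos_of_neg hxz hyz)
  exact (pos_of_mul_pos_right hpos hxz.le).not_gt (neg_of_mul_pos_left hneg hyz.le)

theorem IsSupportingTransversal.of_update {V : Fin n → Finset E} {i₀ : Fin n} {S : Finset E}
    (hS : S ⊆ V i₀) {x : Fin n → E} (hx : IsSupportingTransversal ω (Function.update V i₀ S) x)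
    (hnonneg : ∀ v ∈ V i₀, 0 ≤ hyperplaneForm ω x v) : IsSupportingTransversal ω V x := by
  have hle : Function.update V i₀ S ≤ V := update_le_self_iff.mpr hS
  refine ⟨fun i => hle i (hx.1 i), fun i => ?_⟩
  rcases eq_or_ne i i₀ with rfl | hi
  · exact hnonneg
  · simpa only [Function.update_of_ne hi] using hx.2 i

theorem IsSupportingTransversal.of_update_erase_of_update_singleton [DecidableEq E]
    (hdim : Module.finrank ℝ E = n + 1) (hω : ω ≠ 0) {C : Fin n → ConvexCone ℝ E}
    (hC : HasIndependentTransversals fun i => (C i : Set E))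
    {V : Fin n → Finset E} (hVC : ∀ i, ∀ v ∈ V i, v ∈ C i) {i₀ : Fin n} {v : E} (hv : v ∈ V i₀)
    {x y : Fin n → E}
    (hx : IsSupportingTransversal ω (Function.update V i₀ ((V i₀).erase v)) x)
    (hy : IsSupportingTransversal ω (Function.update V i₀ {v}) y) :
    IsSupportingTransversal ω V x ∨ IsSupportingTransversal ω V y := by
  have hsub : {v} ⊆ V i₀ := Finset.singleton_subset_iff.mpr hv
  have hle_erase : Function.update V i₀ ((V i₀).erase v) ≤ V :=
    update_le_self_iff.mpr (Finset.erase_subset v _)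
  have hle_singleton : Function.update V i₀ {v} ≤ V := update_le_self_iff.mpr hsub
  have hxV : ∀ i, x i ∈ V i := fun i => hle_erase i (hx.1 i)
  have hyV : ∀ i, y i ∈ V i := fun i => hle_singleton i (hy.1 i)
  have hyv : y i₀ = v := by
    simpa only [Function.update_self, Finset.mem_singleton] using hy.1 i₀
  obtain ⟨hxerase, hxne⟩ := (Function.forall_update_iff V
    fun _ s => ∀ p ∈ s, 0 ≤ hyperplaneForm ω x p).mp hx.2
  obtain ⟨-, hyne⟩ := (Function.forall_update_iff V
    fun _ s => ∀ p ∈ s, 0 ≤ hyperplaneForm ω y p).mp hy.2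
  by_cases hxv : 0 ≤ hyperplaneForm ω x v
  · refine .inl (hx.of_update (Finset.erase_subset v _) fun p hp => ?_)
    rcases eq_or_ne p v with rfl | hpv
    · exact hxv
    · exact hxerase p (Finset.mem_erase.mpr ⟨hpv, hp⟩)
  · refine .inr (hy.of_update hsub fun a ha => ?_)
    rcases eq_or_ne a v with rfl | hav
    · rw [← hyv, hyperplaneForm_apply_self]
    · exact (hyperplaneForm_nonneg_or_nonneg hdim hω hC (fun i => hVC i _ (hxV i))
        (fun i => hVC i _ (hyV i)) i₀ (fun i hi => hxne i hi _ (hyV i))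
        (fun i hi => hyne i hi _ (hxV i)) (hVC i₀ a ha)
        (hxerase a (Finset.mem_erase.mpr ⟨hav, ha⟩))).resolve_left (by rwa [hyv])

theorem exists_isSupportingTransversal (hdim : Module.finrank ℝ E = n + 1) (hω : ω ≠ 0)
    {C : Fin n → ConvexCone ℝ E} (hC : HasIndependentTransversals fun i => (C i : Set E))
    (V : Fin n → Finset E) (hVC : ∀ i, ∀ v ∈ V i, v ∈ C i) (hV : ∀ i, (V i).Nonempty) :
    ∃ x, IsSupportingTransversal ω V x := by
  classical
  induction V using WellFoundedLT.induction with
  | ind V ih =>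
    have exists_update : ∀ i₀, ∀ S ⊂ V i₀, S.Nonempty →
        ∃ x, IsSupportingTransversal ω (Function.update V i₀ S) x := by
      intro i₀ S hSV hS
      have hlt : Function.update V i₀ S < V := update_lt_self_iff.mpr hSV
      exact ih _ hlt (fun i v hv => hVC i v (hlt.le i hv))
        ((Function.forall_update_iff V fun _ s => s.Nonempty).mpr ⟨hS, fun i _ => hV i⟩)
    by_cases hnontrivial : ∃ i₀, (V i₀).Nontrivial
    · obtain ⟨i₀, hi₀⟩ := hnontrivial
      obtain ⟨v, hv⟩ := hV i₀
      obtain ⟨x, hx⟩ := exists_update i₀ _ (Finset.erase_ssubset hv) hi₀.erase_nonempty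
      obtain ⟨y, hy⟩ := exists_update i₀ {v}
        ((Finset.singleton_subset_iff.mpr hv).ssubset_of_ne hi₀.ne_singleton.symm)
        (Finset.singleton_nonempty v)
      exact (IsSupportingTransversal.of_update_erase_of_update_singleton hdim hω hC hVC hv
        hx hy).elim (⟨x, ·⟩) (⟨y, ·⟩)
    · choose x hx using hV
      refine ⟨x, hx, fun i v hv => ?_⟩
      have hvx : v = x i := by
        by_contra hne
        exact hnontrivial ⟨i, v, hv, x i, hx i, hne⟩
      rw [hvx, hyperplaneForm_apply_self]

theorem apply_eq_zero_of_hyperplaneForm_nonneg (hdim : Module.finrank ℝ E = n + 1) (hω : ω ≠ 0)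
    {K : Fin n → Set E} (hconv : ∀ i, Convex ℝ (K i)) (hK : HasIndependentTransversals K)
    {x y : Fin n → E} (hx : ∀ i, x i ∈ K i) (hy : ∀ i, y i ∈ K i)
    (hyx : ∀ i, hyperplaneForm (-ω) y (x i) = 0) {z : E} (hxz : 0 ≤ hyperplaneForm ω x z)
    (hyz : 0 ≤ hyperplaneForm (-ω) y z) : hyperplaneForm (-ω) y z = 0 := by
  by_contra hne
  have hpos := hyperplaneForm_mul_pos_of_mem_ker hdim hω hconv hK hx hy hyx
    (hyperplaneForm_apply_self (-ω) y) hne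
  rw [hyperplaneForm_neg, LinearMap.neg_apply] at hyz
  exact hpos.not_ge (mul_nonpos_of_nonneg_of_nonpos hxz (neg_nonneg.mp hyz))

end HyperplaneForm

section Homogenization

variable {V : Type*} [NormedAddCommGroup V] [InnerProductSpace ℝ V]

/-- The linear form on `V × ℝ` whose restriction to the copy `V × {1}` of `V` is the affine
function `⟪u, ·⟫ - α`, so that its kernel is the linear hyperplane over `H_{u,α}`. -/
noncomputable def homogenizedForm (u : V) (α : ℝ) : V × ℝ →ₗ[ℝ] ℝ :=
  (innerₗ V u).coprod (LinearMap.toSpanSingleton ℝ ℝ (-α))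

theorem homogenizedForm_apply_one (u p : V) (α : ℝ) :
    homogenizedForm u α (p, 1) = ⟪u, p⟫_ℝ - α := by
  simp [homogenizedForm, sub_eq_add_neg]

theorem exists_eq_homogenizedForm [FiniteDimensional ℝ V] (f : V × ℝ →ₗ[ℝ] ℝ) :
    ∃ u α, f = homogenizedForm u α := by
  refine ⟨(InnerProductSpace.toDual ℝ V).symm
    (LinearMap.toContinuousLinearMap (f ∘ₗ LinearMap.inl ℝ V ℝ)), -f (0, 1), ?_⟩
  ext <;> simp [homogenizedForm]

theorem homogenizedForm_zero_eq_zero {α : ℝ} {p : V} (hp : homogenizedForm 0 α (p, 1) = 0) :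
    homogenizedForm (0 : V) α = 0 := by
  rw [homogenizedForm_apply_one, inner_zero_left, zero_sub, neg_eq_zero] at hp
  ext <;> simp [homogenizedForm, hp]

theorem eq_zero_of_affineSpan_eq_top {k W : Type*} [Ring k] [AddCommGroup W] [Module k W]
    {s : Set W} (hs : affineSpan k s = ⊤) {f : W × k →ₗ[k] k} (hf : ∀ p ∈ s, f (p, 1) = 0) :
    f = 0 := by
  have hcomp : f.toAffineMap.comp ((AffineMap.id k W).prod (AffineMap.const k W 1)) = 0 :=
    AffineMap.ext_on hs hf
  have hone : ∀ p, f (p, 1) = 0 := fun p => congrArg (fun φ : W →ᵃ[k] k => φ p) hcomp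
  ext p
  · have hp : f (p, 0) = 0 := by
      rw [show (p, (0 : k)) = (p, 1) - (0, 1) by simp, map_sub, hone, hone, sub_zero]
    simpa using hp
  · simp [hone]

/-- The convex cone generated by the copy `s × {1}` of `s` in `V × ℝ`. -/
def coneOver (s : Set V) : ConvexCone ℝ (V × ℝ) :=
  ConvexCone.hull ℝ ((fun p => (p, 1)) '' s)

theorem mk_one_mem_coneOver {s : Set V} {p : V} (hp : p ∈ s) : (p, 1) ∈ coneOver s :=
  ConvexCone.subset_hull (Set.mem_image_of_mem _ hp)

theorem pos_of_mem_coneOver {s : Set V} {f : V × ℝ →ₗ[ℝ] ℝ} (hf : ∀ p ∈ s, 0 < f (p, 1))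
    {z : V × ℝ} (hz : z ∈ coneOver s) : 0 < f z :=
  ConvexCone.hull_min (C := (ConvexCone.strictlyPositive ℝ ℝ).comap f)
    (Set.image_subset_iff.mpr hf) hz

theorem StronglySeparated.hasIndependentTransversals {d m : ℕ}
    {P : Fin m → Set (EuclideanSpace ℝ (Fin d))} (hP : StronglySeparated P) :
    HasIndependentTransversals fun i =>
      (coneOver (P i) : Set (EuclideanSpace ℝ (Fin d) × ℝ)) := by
  intro y hy
  refine linearIndependent_of_forall_exists_neg_pos fun I => ?_
  obtain ⟨u, α, -, hlt, hgt⟩ := hP I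
  refine ⟨homogenizedForm u α, fun i hi => ?_, fun i hi => ?_⟩
  · refine neg_pos.mp (pos_of_mem_coneOver (f := -homogenizedForm u α) (fun p hp => ?_) (hy i))
    rw [LinearMap.neg_apply, homogenizedForm_apply_one, neg_sub, sub_pos]
    exact hlt i hi p hp
  · refine pos_of_mem_coneOver (fun p hp => ?_) (hy i)
    rw [homogenizedForm_apply_one, sub_pos]
    exact hgt i hi p hp

/-- The hyperplane `H_{u,α}` is the one through a transversal of the sets `P i`, its coefficients
are those determined by the transversal and the volume form `ω` on `V × ℝ`, and every `P i` lies on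
its closed nonnegative side. The form `ω` and its opposite give the two tangents. -/
def IsOrientedTangent {n : ℕ} (ω : (V × ℝ) [⋀^Fin (n + 1)]→ₗ[ℝ] ℝ) (P : Fin n → Set V) (u : V)
    (α : ℝ) : Prop :=
  ∃ x : Fin n → V, (∀ i, x i ∈ P i) ∧
    homogenizedForm u α = hyperplaneForm ω (fun i => (x i, 1)) ∧ ∀ i, ∀ p ∈ P i, α ≤ ⟪u, p⟫_ℝ

variable {n : ℕ} {ω : (V × ℝ) [⋀^Fin (n + 1)]→ₗ[ℝ] ℝ} {P : Fin n → Set V} {u : V} {α : ℝ}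

theorem IsOrientedTangent.nonempty_inter_and_subset (h : IsOrientedTangent ω P u α) (i : Fin n) :
    ({x | ⟪u, x⟫_ℝ = α} ∩ P i).Nonempty ∧ P i ⊆ {x | α ≤ ⟪u, x⟫_ℝ} := by
  obtain ⟨x, hxP, hform, hnonneg⟩ := h
  refine ⟨⟨x i, ?_, hxP i⟩, hnonneg i⟩
  have hzero := hyperplaneForm_apply_self ω (fun i => (x i, (1 : ℝ))) i
  rwa [← hform, homogenizedForm_apply_one, sub_eq_zero] at hzero

theorem IsOrientedTangent.homogenizedForm_ne_zero (hdim : Module.finrank ℝ (V × ℝ) = n + 1)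
    (hω : ω ≠ 0) (hP : HasIndependentTransversals fun i => (coneOver (P i) : Set (V × ℝ)))
    (h : IsOrientedTangent ω P u α) : homogenizedForm u α ≠ 0 := by
  obtain ⟨x, hxP, hform, -⟩ := h
  rw [hform]
  exact hyperplaneForm_ne_zero hdim hω (hP _ fun i => mk_one_mem_coneOver (hxP i))

theorem IsOrientedTangent.ne_zero [Nonempty (Fin n)] (hdim : Module.finrank ℝ (V × ℝ) = n + 1)
    (hω : ω ≠ 0) (hP : HasIndependentTransversals fun i => (coneOver (P i) : Set (V × ℝ)))
    (h : IsOrientedTangent ω P u α) : u ≠ 0 := by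
  rintro rfl
  obtain ⟨i⟩ := ‹Nonempty (Fin n)›
  obtain ⟨⟨p, hp, -⟩, -⟩ := h.nonempty_inter_and_subset i
  refine h.homogenizedForm_ne_zero hdim hω hP (homogenizedForm_zero_eq_zero (p := p) ?_)
  rw [homogenizedForm_apply_one]
  exact sub_eq_zero.mpr hp

theorem exists_isOrientedTangent (hdim : Module.finrank ℝ (V × ℝ) = n + 1) (hω : ω ≠ 0)
    (hP : HasIndependentTransversals fun i => (coneOver (P i) : Set (V × ℝ)))
    (hpoly : ∀ i, ∃ W : Finset V, W.Nonempty ∧ P i = convexHull ℝ (W : Set V)) :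
    ∃ u α, IsOrientedTangent ω P u α := by
  classical
  have : FiniteDimensional ℝ (V × ℝ) := .of_finrank_eq_succ hdim
  have : FiniteDimensional ℝ V := .of_surjective (LinearMap.fst ℝ V ℝ) Prod.fst_surjective
  choose W hW hPW using hpoly
  have hWP : ∀ i, ∀ p ∈ W i, p ∈ P i := fun i p hp => hPW i ▸ subset_convexHull ℝ _ hp
  obtain ⟨y, hyW, hnonneg⟩ := exists_isSupportingTransversal hdim hω hP
    (fun i => (W i).image fun p => (p, 1))
    (fun i => Finset.forall_mem_image.mpr fun p hp => mk_one_mem_coneOver (hWP i p hp))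
    (fun i => (hW i).image _)
  choose x hxW hxy using fun i => Finset.mem_image.mp (hyW i)
  obtain rfl : (fun i => (x i, 1)) = y := funext hxy
  obtain ⟨u, α, hform⟩ := exists_eq_homogenizedForm (hyperplaneForm ω fun i => (x i, 1))
  refine ⟨u, α, x, fun i => hWP i _ (hxW i), hform.symm, fun i => ?_⟩
  rw [hPW i]
  refine convexHull_min (fun p hp => ?_) (convex_halfSpace_ge (innerₗ V u).isLinear α)
  have hp := hnonneg i (p, 1) (Finset.mem_image_of_mem _ hp)
  rwa [hform, homogenizedForm_apply_one, sub_nonneg] at hp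

theorem IsOrientedTangent.hyperplane_ne (hdim : Module.finrank ℝ (V × ℝ) = n + 1) (hω : ω ≠ 0)
    (hP : HasIndependentTransversals fun i => (coneOver (P i) : Set (V × ℝ)))
    (hspan : affineSpan ℝ (⋃ i, P i) = ⊤) {v : V} {β : ℝ} (hu : IsOrientedTangent ω P u α)
    (hv : IsOrientedTangent (-ω) P v β) : {x | ⟪u, x⟫_ℝ = α} ≠ {x | ⟪v, x⟫_ℝ = β} := by
  intro heq
  refine hv.homogenizedForm_ne_zero hdim (neg_ne_zero.mpr hω) hP
    (eq_zero_of_affineSpan_eq_top hspan ?_)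
  obtain ⟨x, hxP, hxform, hxnonneg⟩ := hu
  obtain ⟨y, hyP, hyform, hynonneg⟩ := hv
  have hyx : ∀ i, hyperplaneForm (-ω) (fun i => (y i, 1)) (x i, 1) = 0 := by
    intro i
    have hzero := hyperplaneForm_apply_self ω (fun i => (x i, (1 : ℝ))) i
    rw [← hxform, homogenizedForm_apply_one, sub_eq_zero] at hzero
    rw [← hyform, homogenizedForm_apply_one, sub_eq_zero]
    exact heq.subset hzero
  intro p hp
  obtain ⟨i, hpi⟩ := Set.mem_iUnion.mp hp
  rw [hyform]
  refine apply_eq_zero_of_hyperplaneForm_nonneg hdim hω (fun i => (coneOver (P i)).convex) hP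
    (fun i => mk_one_mem_coneOver (hxP i)) (fun i => mk_one_mem_coneOver (hyP i)) hyx ?_ ?_
  · rw [← hxform, homogenizedForm_apply_one, sub_nonneg]
    exact hxnonneg i p hpi
  · rw [← hyform, homogenizedForm_apply_one, sub_nonneg]
    exact hynonneg i p hpi

end Homogenization

/-- For a strongly separated, affinely spanning family of `d` polytopes in `ℝ^d`, there
exist two distinct affine hyperplanes, each tangent to every polytope and containing every
polytope in its closed nonnegative side. -/
theorem two_sandwiching_tangents_polytopes {d : ℕ}
    (P : Fin d → Set (EuclideanSpace ℝ (Fin d)))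
    (hpoly : ∀ i, ∃ V : Finset (EuclideanSpace ℝ (Fin d)),
      V.Nonempty ∧ P i = convexHull ℝ (V : Set _))
    (hspan : affineSpan ℝ (⋃ i, P i) = ⊤)
    (hsep : StronglySeparated P) :
    ∃ (u₁ u₂ : EuclideanSpace ℝ (Fin d)) (α₁ α₂ : ℝ), u₁ ≠ 0 ∧ u₂ ≠ 0 ∧
      {x : EuclideanSpace ℝ (Fin d) | ⟪u₁, x⟫_ℝ = α₁} ≠ {x | ⟪u₂, x⟫_ℝ = α₂} ∧
      (∀ i : Fin d, ({x | ⟪u₁, x⟫_ℝ = α₁} ∩ P i).Nonempty ∧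
        P i ⊆ {x | α₁ ≤ ⟪u₁, x⟫_ℝ}) ∧
      (∀ i : Fin d, ({x | ⟪u₂, x⟫_ℝ = α₂} ∩ P i).Nonempty ∧
        P i ⊆ {x | α₂ ≤ ⟪u₂, x⟫_ℝ}) := by
  have : Nonempty (Fin d) := by
    obtain ⟨p, hp⟩ := AffineSubspace.nonempty_of_affineSpan_eq_top _ _ _ hspan
    exact (Set.mem_iUnion.mp hp).nonempty
  have hdim : Module.finrank ℝ (EuclideanSpace ℝ (Fin d) × ℝ) = d + 1 := by
    rw [Module.finrank_prod, finrank_euclideanSpace_fin, Module.finrank_self]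
  have hω : (Module.finBasisOfFinrankEq ℝ _ hdim).det ≠ 0 := Module.Basis.det_ne_zero _
  have hind := hsep.hasIndependentTransversals
  obtain ⟨u₁, α₁, h₁⟩ := exists_isOrientedTangent hdim hω hind hpoly
  obtain ⟨u₂, α₂, h₂⟩ := exists_isOrientedTangent hdim (neg_ne_zero.mpr hω) hind hpoly
  exact ⟨u₁, u₂, α₁, α₂, h₁.ne_zero hdim hω hind, h₂.ne_zero hdim (neg_ne_zero.mpr hω) hind,
    h₁.hyperplane_ne hdim hω hind hspan h₂,
    h₁.nonempty_inter_and_subset, h₂.nonempty_inter_and_subset⟩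
end

section
/- Let K₁,…,K_d be a strongly separated family of convex bodies in ℝ^d. Then there exist two distinct affine hyperplanes, given by pairs (u₁,α₁) and (u₂,α₂) with {x : ⟨u₁,x⟩ = α₁} ≠ {x : ⟨u₂,x⟩ = α₂}, each tangent to every Kᵢ with every Kᵢ on the same closed side: for j = 1,2 and every i, H_{uⱼ,αⱼ} ∩ Kᵢ ≠ ∅ and Kᵢ ⊆ {x : ⟨uⱼ,x⟩ ≥ αⱼ}. -/
open scoped InnerProductSpace

/-!
Place `E` in `V = E × ℝ` at height `1`, so that affinely independent points become linearly
independent vectors, and fix a volume form `ω` on `V`. For `x i ∈ K i` the functional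
`r ↦ ω (r, x₁, …, x_d)` vanishes on the hyperplane through the `x i` and orients it. Since `ω`
vanishes on no independent tuple, the orientation cannot flip as the `x i` move in the convex sets
`K i`.

Suppose each point `y` of one body `K j` is completed to a transversal `X y` whose hyperplane
supports the bodies already treated and whose points in the remaining bodies are fixed. Rigidity
makes `0 ≤ ω (z, X y)` a total preorder on the points `y`, `z` of `K j`. A least element, which
exists by compactness, gives a transversal hyperplane that supports `K j` as well, and induction on
the set of treated bodies yields one supporting all of them. The form `-ω` yields a second one,
which differs from the first because `ω` orients the two in opposite ways.
-/

open Module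

section Functional

variable {V : Type*} [AddCommGroup V] [Module ℝ V]

lemma pos_of_forall_pos_imp_nonneg {f g : V →ₗ[ℝ] ℝ} (hg : g ≠ 0)
    (hfg : ∀ v, 0 < f v → 0 ≤ g v) {v : V} (hv : 0 < f v) : 0 < g v := by
  obtain ⟨r, hr⟩ := LinearMap.surjective hg (-1)
  obtain ⟨t, ht, htv⟩ := exists_pos_mul_lt hv (-f r)
  have hmem : 0 ≤ g (v + t • r) := hfg _ (by simp only [map_add, map_smul, smul_eq_mul]; linarith)
  simp only [map_add, map_smul, hr, smul_eq_mul] at hmem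
  linarith

lemma exists_mem_segment_eq_zero {f : V →ₗ[ℝ] ℝ} {x y : V} (hx : 0 ≤ f x) (hy : f y ≤ 0) :
    ∃ z ∈ segment ℝ x y, f z = 0 := by
  have h0 : (0 : ℝ) ∈ segment ℝ (f x) (f y) := by
    rw [segment_symm, segment_eq_Icc (hy.trans hx)]
    exact ⟨hy, hx⟩
  rwa [← f.coe_toAffineMap, ← image_segment] at h0

lemma exists_mem_cone_apply_eq_apply (C : ConvexCone ℝ V) {f g : V →ₗ[ℝ] ℝ} {x y : V}
    (hx : x ∈ C) (hy : y ∈ C) (hfx : f x = 0) (hgy : g y = 0) (hxy : 0 ≤ f y * g x) :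
    ∃ p ∈ C, ∃ q ∈ C, f p = 0 ∧ g q = 0 ∧ f q = g p := by
  rcases eq_or_ne (f y) 0 with hfy | hfy
  · exact ⟨y, hy, y, hy, hfy, hgy, hfy.trans hgy.symm⟩
  rcases eq_or_ne (g x) 0 with hgx | hgx
  · exact ⟨x, hx, x, hx, hfx, hgx, hfx.trans hgx.symm⟩
  refine ⟨(f y * g x) • x, C.smul_mem (hxy.lt_of_ne' (mul_ne_zero hfy hgx)) hx,
    g x ^ 2 • y, C.smul_mem (by positivity) hy, by simp [hfx], by simp [hgy], ?_⟩
  simp only [map_smul, smul_eq_mul]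
  ring

end Functional

section VolumeForm

variable {V : Type*} [AddCommGroup V] [Module ℝ V] {n : ℕ}

/-- The linear functional `r ↦ ω (r, x₁, …, xₙ)`. When `x` is linearly independent and `ω` is a
volume form, its kernel is the hyperplane spanned by `x` and its sign orients that hyperplane. -/
def hyperplaneFunctional (ω : V [⋀^Fin (n + 1)]→ₗ[ℝ] ℝ) (x : Fin n → V) : V →ₗ[ℝ] ℝ where
  toFun r := ω (Matrix.vecCons r x)
  map_add' r s := ω.map_vecCons_add x r s
  map_smul' c r := ω.map_vecCons_smul x c r

variable {ω : V [⋀^Fin (n + 1)]→ₗ[ℝ] ℝ} {x : Fin n → V}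

lemma hyperplaneFunctional_self (i : Fin n) : hyperplaneFunctional ω x (x i) = 0 :=
  ω.map_eq_zero_of_eq _ (i := 0) (j := i.succ) rfl (Fin.succ_ne_zero i).symm

lemma map_ne_zero_of_linearIndependent (hV : finrank ℝ V = n + 1) (hω : ω ≠ 0)
    {v : Fin (n + 1) → V} (hv : LinearIndependent ℝ v) : ω v ≠ 0 := by
  have hcard : Fintype.card (Fin (n + 1)) = finrank ℝ V := by rw [hV, Fintype.card_fin]
  rw [← coe_basisOfLinearIndependentOfCardEqFinrank hv hcard]
  exact (ω.map_basis_ne_zero_iff _).2 hω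

lemma hyperplaneFunctional_apply_ne_zero (hV : finrank ℝ V = n + 1) (hω : ω ≠ 0)
    (hx : LinearIndependent ℝ x) {r : V} (hr : r ∉ Submodule.span ℝ (Set.range x)) :
    hyperplaneFunctional ω x r ≠ 0 :=
  map_ne_zero_of_linearIndependent hV hω (linearIndependent_finCons.2 ⟨hx, hr⟩)

lemma hyperplaneFunctional_ne_zero (hV : finrank ℝ V = n + 1) (hω : ω ≠ 0)
    (hx : LinearIndependent ℝ x) : hyperplaneFunctional ω x ≠ 0 := by
  obtain ⟨r, hr⟩ : ∃ r, r ∉ Submodule.span ℝ (Set.range x) := by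
    by_contra! hspan
    have hcard := finrank_range_le_card (R := ℝ) x
    rw [Set.finrank, Submodule.eq_top_iff'.2 hspan, finrank_top, hV, Fintype.card_fin] at hcard
    omega
  exact fun h ↦ hyperplaneFunctional_apply_ne_zero hV hω hx hr (DFunLike.congr_fun h r)

end VolumeForm

section Orientation

variable {V : Type*} [AddCommGroup V] [Module ℝ V] [TopologicalSpace V] [IsTopologicalAddGroup V]
  [ContinuousSMul ℝ V] [T2Space V] {n : ℕ} {ω : V [⋀^Fin (n + 1)]→ₗ[ℝ] ℝ} {x y : Fin n → V}

lemma continuous_alternatingMap (hV : finrank ℝ V = n + 1) : Continuous ω := by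
  have : FiniteDimensional ℝ V := .of_finrank_eq_succ hV
  rw [ω.eq_smul_basis_det (finBasisOfFinrankEq ℝ V hV)]
  refine continuous_const.mul (Continuous.matrix_det (continuous_matrix fun i j ↦ ?_))
  exact ((finBasisOfFinrankEq ℝ V hV).coord i).continuous_of_finiteDimensional.comp
    (continuous_apply j)

/-- At the point `a • x + b • y` of the segment, `a • f + b • g` vanishes on the tuple but not
at `r`, so `ω (r, ·)` has no zero on the segment. -/
lemma hyperplaneFunctional_pos_of_segment (hV : finrank ℝ V = n + 1) (hω : ω ≠ 0)
    (hxy : ∀ z ∈ segment ℝ x y, LinearIndependent ℝ z) {f g : V →ₗ[ℝ] ℝ}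
    (hfx : ∀ i, f (x i) = 0) (hgy : ∀ i, g (y i) = 0) (hfg : ∀ i, f (y i) + g (x i) = 0)
    {r : V} (hf : 0 < f r) (hg : 0 < g r) (hx : 0 < hyperplaneFunctional ω x r) :
    0 < hyperplaneFunctional ω y r := by
  have hne : ∀ z ∈ segment ℝ x y, hyperplaneFunctional ω z r ≠ 0 := by
    intro z hz
    refine hyperplaneFunctional_apply_ne_zero hV hω (hxy z hz) fun hr ↦ ?_
    obtain ⟨a, b, ha, hb, hab, rfl⟩ := hz
    have hker : Submodule.span ℝ (Set.range (a • x + b • y)) ≤ (a • f + b • g).ker := by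
      rw [Submodule.span_le]
      rintro _ ⟨i, rfl⟩
      simp only [Pi.add_apply, Pi.smul_apply, SetLike.mem_coe, LinearMap.mem_ker, map_add,
        map_smul, LinearMap.add_apply, LinearMap.smul_apply, hfx, hgy, smul_eq_mul]
      linear_combination a * b * hfg i
    have hpos : 0 < a * f r + b * g r := convex_Ioi (0 : ℝ) hf hg ha hb hab
    exact hpos.ne' (hker hr)
  by_contra! hy
  have hcont : Continuous fun z ↦ hyperplaneFunctional ω z r :=
    (continuous_alternatingMap hV).comp (by fun_prop)
  obtain ⟨z, hz, hz0⟩ := (convex_segment x y).isPreconnected.intermediate_value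
    (right_mem_segment ℝ x y) (left_mem_segment ℝ x y) hcont.continuousOn ⟨hy, hx.le⟩
  exact hne z hz hz0

lemma hyperplaneFunctional_pos_of_forall_eq_zero (hV : finrank ℝ V = n + 1) (hω : ω ≠ 0)
    (hxy : ∀ z ∈ segment ℝ x y, LinearIndependent ℝ z)
    (hy : ∀ i, hyperplaneFunctional ω x (y i) = 0) {r : V}
    (hr : 0 < hyperplaneFunctional ω x r) : 0 < hyperplaneFunctional ω y r :=
  hyperplaneFunctional_pos_of_segment hV hω hxy hyperplaneFunctional_self hy
    (fun i ↦ by rw [hy, hyperplaneFunctional_self, add_zero]) hr hr hr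

/-- Write `f`, `g` for the functionals of `x`, `y`. Rescaling in the cones gives tuples `p` in
`ker f` and `q` in `ker g` with `f (q i) = g (p i)`. Were `f` and `g` of opposite signs at a point,
the orientation would propagate from `x` to `p` to `q` to `y`, a contradiction. -/
lemma hyperplaneFunctional_pos_of_cones (hV : finrank ℝ V = n + 1) (hω : ω ≠ 0)
    {C : Fin n → ConvexCone ℝ V}
    (hC : ∀ z ∈ Set.univ.pi fun i ↦ (C i : Set V), LinearIndependent ℝ z)
    (hx : ∀ i, x i ∈ C i) (hy : ∀ i, y i ∈ C i)
    (hxy : ∀ i, 0 ≤ hyperplaneFunctional ω x (y i) * hyperplaneFunctional ω y (x i))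
    {r : V} (hr : 0 < hyperplaneFunctional ω x r) : 0 < hyperplaneFunctional ω y r := by
  have hseg {z w : Fin n → V} (hz : ∀ i, z i ∈ C i) (hw : ∀ i, w i ∈ C i) :
      ∀ v ∈ segment ℝ z w, LinearIndependent ℝ v := fun v hv ↦
    hC v ((convex_pi fun i _ ↦ (C i).convex).segment_subset (fun i _ ↦ hz i) (fun i _ ↦ hw i) hv)
  choose p hp q hq hxp hyq hpq using fun i ↦ exists_mem_cone_apply_eq_apply (C i) (hx i) (hy i)
    (hyperplaneFunctional_self (ω := ω) i) (hyperplaneFunctional_self (ω := ω) i) (hxy i)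
  refine pos_of_forall_pos_imp_nonneg
    (hyperplaneFunctional_ne_zero hV hω (hC y fun i _ ↦ hy i)) (fun s hs ↦ ?_) hr
  by_contra! hys
  have hps : 0 < hyperplaneFunctional ω p s :=
    hyperplaneFunctional_pos_of_forall_eq_zero hV hω (hseg hx hp) hxp hs
  have hqs : 0 < hyperplaneFunctional ω q (-s) :=
    hyperplaneFunctional_pos_of_forall_eq_zero hV hω (hseg hy hq) hyq (by simpa using hys)
  have hqs' : 0 < hyperplaneFunctional ω q s :=
    hyperplaneFunctional_pos_of_segment hV hω (hseg hp hq) (g := -hyperplaneFunctional ω y) hxp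
      (by simpa using hyq) (fun i ↦ by simp [hpq]) hs (by simpa using hys) hps
  rw [map_neg] at hqs
  linarith

end Orientation

section LeastElement

lemma exists_forall_rel_of_isClosed {X : Type*} [TopologicalSpace X] [CompactSpace X] [Nonempty X]
    {r : X → X → Prop} (htotal : ∀ y z, r y z ∨ r z y)
    (htrans : ∀ y₁ y₂ y₃, r y₁ y₂ → r y₂ y₃ → r y₁ y₃) (hclosed : ∀ z, IsClosed {y | r y z}) :
    ∃ y, ∀ z, r y z := by
  have hdir : Directed (· ⊇ ·) fun z ↦ {y | r y z} := fun a b ↦ by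
    rcases htotal a b with hab | hba
    · exact ⟨a, subset_rfl, fun y hy ↦ htrans y a b hy hab⟩
    · exact ⟨b, fun y hy ↦ htrans y b a hy hba, subset_rfl⟩
  simpa [Set.Nonempty] using
    IsCompact.nonempty_iInter_of_directed_nonempty_isCompact_isClosed _ hdir
    (fun z ↦ ⟨z, (htotal z z).elim id id⟩) (fun z ↦ (hclosed z).isCompact) hclosed

variable {V : Type*} [AddCommGroup V] [Module ℝ V] {C : Set V} {w : V → V →ₗ[ℝ] ℝ}

/-- A choice, for each point `y` of `C`, of an oriented hyperplane `w y = 0` through `y`, such that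
two of these hyperplanes agree, with their orientations, unless each of the two base points lies
strictly on the side of the other hyperplane opposite to that of its partner. -/
structure IsCoherentHyperplaneFamily (C : Set V) (w : V → V →ₗ[ℝ] ℝ) : Prop where
  apply_self : ∀ y ∈ C, w y y = 0
  pos_of_pos : ∀ y ∈ C, ∀ z ∈ C, 0 ≤ w y z * w z y → ∀ v, 0 < w y v → 0 < w z v

namespace IsCoherentHyperplaneFamily

lemma apply_eq_zero (hw : IsCoherentHyperplaneFamily C w) {y z : V} (hy : y ∈ C) (hz : z ∈ C)
    (hyz : 0 ≤ w y z * w z y) : w y z = 0 := by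
  have hpos := hw.pos_of_pos y hy z hz hyz
  rcases lt_trichotomy (w y z) 0 with h | h | h
  · exact absurd (hpos (-z) (by simpa using h)) (by simp [hw.apply_self z hz])
  · exact h
  · exact absurd (hpos z h) (by simp [hw.apply_self z hz])

lemma nonneg_iff_nonpos (hw : IsCoherentHyperplaneFamily C w) {y z : V} (hy : y ∈ C)
    (hz : z ∈ C) : 0 ≤ w y z ↔ w z y ≤ 0 := by
  constructor <;> intro h <;> by_contra! h'
  · exact h'.ne' (hw.apply_eq_zero hz hy (mul_nonneg h'.le h))
  · exact h'.ne (hw.apply_eq_zero hy hz (mul_nonneg_of_nonpos_of_nonpos h'.le h))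

lemma nonneg_trans (hw : IsCoherentHyperplaneFamily C w) (hC : Convex ℝ C) {y₁ y₂ y₃ : V}
    (h₁ : y₁ ∈ C) (h₂ : y₂ ∈ C) (h₃ : y₃ ∈ C) (h₁₂ : 0 ≤ w y₁ y₂) (h₂₃ : 0 ≤ w y₂ y₃) :
    0 ≤ w y₁ y₃ := by
  by_contra! h₁₃
  obtain ⟨z, hz, hz₀⟩ := exists_mem_segment_eq_zero h₁₂ h₁₃.le
  have hzC : z ∈ C := hC.segment_subset h₂ h₃ hz
  have h₂z : 0 ≤ w y₂ z := by
    obtain ⟨a, b, -, hb, -, rfl⟩ := hz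
    simpa [hw.apply_self y₂ h₂] using mul_nonneg hb h₂₃
  have hz₂ : w z y₂ ≤ 0 := (hw.nonneg_iff_nonpos h₂ hzC).1 h₂z
  have h₁₂' : w y₁ y₂ = 0 := by
    by_contra hne
    exact hz₂.not_gt (hw.pos_of_pos y₁ h₁ z hzC (by simp [hz₀]) y₂ (h₁₂.lt_of_ne' hne))
  have h₂₃' : 0 < w y₂ (-y₃) :=
    hw.pos_of_pos y₁ h₁ y₂ h₂ (by simp [h₁₂']) (-y₃) (by simpa using h₁₃)
  rw [map_neg] at h₂₃'
  linarith

lemma exists_forall_nonneg [TopologicalSpace V] (hw : IsCoherentHyperplaneFamily C w)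
    (hcomp : IsCompact C) (hconv : Convex ℝ C) (hne : C.Nonempty)
    (hcont : ∀ y ∈ C, Continuous (w y)) : ∃ y ∈ C, ∀ z ∈ C, 0 ≤ w y z := by
  have : CompactSpace C := isCompact_iff_compactSpace.1 hcomp
  have : Nonempty C := hne.to_subtype
  have hiff (y z : C) : 0 ≤ w y z ↔ w z y ≤ 0 := hw.nonneg_iff_nonpos y.2 z.2
  obtain ⟨y, hy⟩ := exists_forall_rel_of_isClosed (r := fun y z : C ↦ 0 ≤ w y z)
    (fun y z ↦ by rw [hiff y z]; exact le_total _ _)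
    (fun y₁ y₂ y₃ ↦ hw.nonneg_trans hconv y₁.2 y₂.2 y₃.2)
    (fun z ↦ by
      simp only [hiff]
      exact isClosed_le ((hcont z z.2).comp continuous_subtype_val) continuous_const)
  exact ⟨y, y.2, fun z hz ↦ hy ⟨z, hz⟩⟩

end IsCoherentHyperplaneFamily

end LeastElement

section SupportingTransversal

variable {V : Type*} [AddCommGroup V] [Module ℝ V]

lemma linearIndependent_of_mem_hull {ι : Type*} {K : ι → Set V} (hconv : ∀ i, Convex ℝ (K i))
    (hind : ∀ z ∈ Set.univ.pi K, LinearIndependent ℝ z) {z : ι → V}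
    (hz : ∀ i, z i ∈ ConvexCone.hull ℝ (K i)) : LinearIndependent ℝ z := by
  choose c hc y hy hcy using fun i ↦ (ConvexCone.mem_hull_of_convex (hconv i)).1 (hz i)
  have := (hind y fun i _ ↦ hy i).units_smul fun i ↦ Units.mk0 (c i) (hc i).ne'
  convert this using 1
  exact funext fun i ↦ (hcy i).symm

variable [TopologicalSpace V] [IsTopologicalAddGroup V]
  [ContinuousSMul ℝ V] [T2Space V] {n : ℕ} {ω : V [⋀^Fin (n + 1)]→ₗ[ℝ] ℝ} {K : Fin n → Set V}

lemma isCoherentHyperplaneFamily_hyperplaneFunctional (hV : finrank ℝ V = n + 1) (hω : ω ≠ 0)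
    (hconv : ∀ i, Convex ℝ (K i)) (hind : ∀ z ∈ Set.univ.pi K, LinearIndependent ℝ z)
    {j : Fin n} {X : V → Fin n → V} (hX : ∀ y ∈ K j, X y ∈ Set.univ.pi K)
    (hXj : ∀ y ∈ K j, X y j = y)
    (hXi : ∀ y ∈ K j, ∀ z ∈ K j, ∀ i ≠ j, 0 ≤ hyperplaneFunctional ω (X y) (X z i)) :
    IsCoherentHyperplaneFamily (K j) fun y ↦ hyperplaneFunctional ω (X y) where
  apply_self y hy := by
    simpa only [hXj y hy] using hyperplaneFunctional_self (ω := ω) (x := X y) j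
  pos_of_pos y hy z hz hyz _ := by
    refine hyperplaneFunctional_pos_of_cones hV hω
      (fun _ hx ↦ linearIndependent_of_mem_hull hconv hind fun i ↦ hx i trivial)
      (fun i ↦ ConvexCone.subset_hull (hX y hy i trivial))
      (fun i ↦ ConvexCone.subset_hull (hX z hz i trivial)) fun i ↦ ?_
    rcases eq_or_ne i j with rfl | hij
    · rwa [hXj y hy, hXj z hz]
    · exact mul_nonneg (hXi y hy z hz i hij) (hXi z hz y hy i hij)

lemma exists_transversal_nonneg_on (hV : finrank ℝ V = n + 1) (hω : ω ≠ 0)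
    (hcomp : ∀ i, IsCompact (K i)) (hconv : ∀ i, Convex ℝ (K i))
    (hind : ∀ z ∈ Set.univ.pi K, LinearIndependent ℝ z) (S : Finset (Fin n)) :
    ∀ p ∈ Set.univ.pi K, ∃ x ∈ Set.univ.pi K, (∀ i ∉ S, x i = p i) ∧
      ∀ i ∈ S, ∀ y ∈ K i, 0 ≤ hyperplaneFunctional ω x y := by
  have : FiniteDimensional ℝ V := .of_finrank_eq_succ hV
  induction S using Finset.induction_on with
  | empty => exact fun p hp ↦ ⟨p, hp, by simp, by simp⟩
  | insert j S hj ih =>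
    intro p hp
    have hext : ∀ y ∈ K j, ∃ x ∈ Set.univ.pi K, x j = y ∧ (∀ i ∉ insert j S, x i = p i) ∧
        ∀ i ∈ S, ∀ z ∈ K i, 0 ≤ hyperplaneFunctional ω x z := fun y hy ↦ by
      obtain ⟨x, hx, hxp, hxS⟩ := ih (Function.update p j y)
        ((Set.update_mem_pi_iff_of_mem hp).2 fun _ ↦ hy)
      refine ⟨x, hx, by simpa using hxp j hj, fun i hi ↦ ?_, hxS⟩
      rw [Finset.mem_insert, not_or] at hi
      rw [hxp i hi.2, Function.update_of_ne hi.1]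
    choose! X hXK hXj hXp hXS using hext
    have hXi : ∀ y ∈ K j, ∀ z ∈ K j, ∀ i ≠ j, 0 ≤ hyperplaneFunctional ω (X y) (X z i) := by
      intro y hy z hz i hij
      by_cases hiS : i ∈ S
      · exact hXS y hy i hiS _ (hXK z hz i trivial)
      · have hi : i ∉ insert j S := by simp [hij, hiS]
        rw [hXp z hz i hi, ← hXp y hy i hi, hyperplaneFunctional_self]
    obtain ⟨y, hy, hymin⟩ :=
      (isCoherentHyperplaneFamily_hyperplaneFunctional hV hω hconv hind hXK hXj
        hXi).exists_forall_nonneg (hcomp j) (hconv j) ⟨p j, hp j trivial⟩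
        fun y _ ↦ (hyperplaneFunctional ω (X y)).continuous_of_finiteDimensional
    exact ⟨X y, hXK y hy, hXp y hy, (Finset.forall_mem_insert ..).2 ⟨hymin, hXS y hy⟩⟩

lemma exists_transversal_nonneg (hV : finrank ℝ V = n + 1) (hω : ω ≠ 0)
    (hcomp : ∀ i, IsCompact (K i)) (hconv : ∀ i, Convex ℝ (K i)) (hne : ∀ i, (K i).Nonempty)
    (hind : ∀ z ∈ Set.univ.pi K, LinearIndependent ℝ z) :
    ∃ x ∈ Set.univ.pi K, ∀ i, ∀ y ∈ K i, 0 ≤ hyperplaneFunctional ω x y := by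
  obtain ⟨p, hp⟩ := Set.univ_pi_nonempty_iff.2 hne
  obtain ⟨x, hx, -, hxK⟩ :=
    exists_transversal_nonneg_on hV hω hcomp hconv hind Finset.univ p hp
  exact ⟨x, hx, fun i ↦ hxK i (Finset.mem_univ i)⟩

end SupportingTransversal

section Affine

lemma linearIndependent_of_mem_pi_prod_one {ι E : Type*} [AddCommGroup E] [Module ℝ E]
    {K : ι → Set E} (hK : ∀ x ∈ Set.univ.pi K, AffineIndependent ℝ x) {z : ι → E × ℝ}
    (hz : z ∈ Set.univ.pi fun i ↦ K i ×ˢ {1}) : LinearIndependent ℝ z := by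
  have hz₂ (i : ι) : (z i).2 = 1 := (hz i trivial).2
  rw [linearIndependent_iff']
  intro s c hc
  simp only [Prod.ext_iff, Prod.fst_sum, Prod.snd_sum, Prod.smul_fst, Prod.smul_snd, hz₂,
    smul_eq_mul, mul_one, Prod.fst_zero, Prod.snd_zero] at hc
  exact affineIndependent_iff.1 (hK (fun i ↦ (z i).1) fun i _ ↦ (hz i trivial).1) s c hc.2 hc.1

lemma exists_mem_inner_ne {E : Type*} [NormedAddCommGroup E] [InnerProductSpace ℝ E] {s : Set E}
    (hs : affineSpan ℝ s = ⊤) {u : E} (hu : u ≠ 0) (α : ℝ) : ∃ x ∈ s, ⟪u, x⟫_ℝ ≠ α := by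
  by_contra! h
  have hker : vectorSpan ℝ s ≤ (innerₛₗ ℝ u).ker := by
    rw [vectorSpan_def, Submodule.span_le]
    rintro _ ⟨x, hx, y, hy, rfl⟩
    simp [inner_sub_right, h x hx, h y hy]
  rw [AffineSubspace.vectorSpan_eq_top_of_affineSpan_eq_top ℝ E E hs] at hker
  exact hu (inner_self_eq_zero.1 (hker (Submodule.mem_top (x := u))))

variable {E : Type*} [NormedAddCommGroup E] [InnerProductSpace ℝ E] [FiniteDimensional ℝ E]

lemma exists_forall_apply_eq_inner_sub {f : E × ℝ →ₗ[ℝ] ℝ} (hf : f ≠ 0) {x₀ : E}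
    (hx₀ : f (x₀, 1) = 0) :
    ∃ (u : E) (α : ℝ), u ≠ 0 ∧ ∀ x, f (x, 1) = ⟪u, x⟫_ℝ - α := by
  set g : E →L[ℝ] ℝ := (f ∘ₗ LinearMap.inl ℝ E ℝ).toContinuousLinearMap
  set u : E := (InnerProductSpace.toDual ℝ E).symm g
  have hfu (x : E) (t : ℝ) : f (x, t) = ⟪u, x⟫_ℝ + t * f (0, 1) := by
    have hsplit : (x, t) = (x, 0) + t • ((0 : E), (1 : ℝ)) := by simp
    rw [InnerProductSpace.toDual_symm_apply, hsplit, map_add, map_smul, smul_eq_mul]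
    rfl
  refine ⟨u, -f (0, 1), fun hu ↦ hf ?_, fun x ↦ by rw [hfu]; ring⟩
  have hf1 : f (0, 1) = 0 := by simpa [hfu x₀, hu] using hx₀
  refine LinearMap.ext fun ⟨x, t⟩ ↦ ?_
  rw [hfu, hu, hf1, inner_zero_left, mul_zero, add_zero, LinearMap.zero_apply]

variable {d : ℕ} {K : Fin d → Set E}

lemma exists_supporting_hyperplane [NeZero d] (hE : finrank ℝ E = d)
    (hcomp : ∀ i, IsCompact (K i)) (hconv : ∀ i, Convex ℝ (K i)) (hne : ∀ i, (K i).Nonempty)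
    (hind : ∀ x ∈ Set.univ.pi K, AffineIndependent ℝ x)
    {ω : (E × ℝ) [⋀^Fin (d + 1)]→ₗ[ℝ] ℝ} (hω : ω ≠ 0) :
    ∃ z ∈ Set.univ.pi fun i ↦ K i ×ˢ {(1 : ℝ)}, ∃ (u : E) (α : ℝ), u ≠ 0 ∧
      (∀ y, hyperplaneFunctional ω z (y, 1) = ⟪u, y⟫_ℝ - α) ∧
      ∀ i, ({y | ⟪u, y⟫_ℝ = α} ∩ K i).Nonempty ∧ K i ⊆ {y | α ≤ ⟪u, y⟫_ℝ} := by
  have hV : finrank ℝ (E × ℝ) = d + 1 := by rw [finrank_prod, hE, finrank_self]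
  obtain ⟨z, hz, hzK⟩ := exists_transversal_nonneg hV hω
    (fun i ↦ (hcomp i).prod isCompact_singleton) (fun i ↦ (hconv i).prod (convex_singleton 1))
    (fun i ↦ (hne i).prod (Set.singleton_nonempty 1))
    (fun z hz ↦ linearIndependent_of_mem_pi_prod_one hind hz)
  have hz₁ (i : Fin d) : z i = ((z i).1, 1) := Prod.ext rfl (hz i trivial).2
  have hz₀ (i : Fin d) : hyperplaneFunctional ω z ((z i).1, 1) = 0 := by
    rw [← hz₁, hyperplaneFunctional_self]
  obtain ⟨u, α, hu, hf⟩ := exists_forall_apply_eq_inner_sub (hyperplaneFunctional_ne_zero hV hω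
    (linearIndependent_of_mem_pi_prod_one hind hz)) (hz₀ 0)
  refine ⟨z, hz, u, α, hu, hf, fun i ↦ ⟨⟨(z i).1, ?_, (hz i trivial).1⟩, fun y hy ↦ ?_⟩⟩
  · exact sub_eq_zero.1 ((hf _).symm.trans (hz₀ i))
  · exact sub_nonneg.1 ((hzK i (y, 1) ⟨hy, rfl⟩).trans_eq (hf y))

lemma hyperplane_ne_of_neg (hE : finrank ℝ E = d) (hconv : ∀ i, Convex ℝ (K i))
    (hind : ∀ x ∈ Set.univ.pi K, AffineIndependent ℝ x)
    (hspan : affineSpan ℝ (⋃ i, K i) = ⊤)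
    {ω : (E × ℝ) [⋀^Fin (d + 1)]→ₗ[ℝ] ℝ} (hω : ω ≠ 0) {z w : Fin d → E × ℝ}
    (hz : z ∈ Set.univ.pi fun i ↦ K i ×ˢ {1}) (hw : w ∈ Set.univ.pi fun i ↦ K i ×ˢ {1})
    {u v : E} {α β : ℝ} (hu : u ≠ 0)
    (hf : ∀ y, hyperplaneFunctional ω z (y, 1) = ⟪u, y⟫_ℝ - α)
    (hg : ∀ y, hyperplaneFunctional (-ω) w (y, 1) = ⟪v, y⟫_ℝ - β)
    (huK : ∀ i, K i ⊆ {y | α ≤ ⟪u, y⟫_ℝ}) (hvK : ∀ i, K i ⊆ {y | β ≤ ⟪v, y⟫_ℝ}) :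
    {y | ⟪u, y⟫_ℝ = α} ≠ {y | ⟪v, y⟫_ℝ = β} := by
  intro heq
  have hV : finrank ℝ (E × ℝ) = d + 1 := by rw [finrank_prod, hE, finrank_self]
  obtain ⟨y, hy, hyα⟩ := exists_mem_inner_ne hspan hu α
  obtain ⟨i, hyi⟩ := Set.mem_iUnion.1 hy
  have hseg : ∀ t ∈ segment ℝ z w, LinearIndependent ℝ t := fun t ht ↦
    linearIndependent_of_mem_pi_prod_one hind <|
      (convex_pi fun i _ ↦ (hconv i).prod (convex_singleton 1)).segment_subset hz hw ht
  have hzw (i : Fin d) : hyperplaneFunctional ω z (w i) = 0 := by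
    have hw₁ : w i = ((w i).1, 1) := Prod.ext rfl (hw i trivial).2
    have hβ : ⟪v, (w i).1⟫_ℝ = β := by
      rw [← sub_eq_zero, ← hg, ← hw₁, hyperplaneFunctional_self]
    have hα : ⟪u, (w i).1⟫_ℝ = α := (Set.ext_iff.1 heq _).2 hβ
    rw [hw₁, hf, hα, sub_self]
  have hzy : 0 < hyperplaneFunctional ω z (y, 1) := by
    rw [hf, sub_pos]
    exact (huK i hyi).lt_of_ne' hyα
  have hwy : 0 < hyperplaneFunctional ω w (y, 1) :=
    hyperplaneFunctional_pos_of_forall_eq_zero hV hω hseg hzw hzy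
  have hwy' : 0 ≤ -hyperplaneFunctional ω w (y, 1) :=
    (sub_nonneg.2 (hvK i hyi)).trans_eq (hg y).symm
  linarith

theorem two_sandwiching_tangents_convex_bodies_general (hE : finrank ℝ E = d)
    (hcomp : ∀ i, IsCompact (K i)) (hconv : ∀ i, Convex ℝ (K i)) (hne : ∀ i, (K i).Nonempty)
    (hind : ∀ x ∈ Set.univ.pi K, AffineIndependent ℝ x)
    (hspan : affineSpan ℝ (⋃ i, K i) = ⊤) :
    ∃ (u₁ u₂ : E) (α₁ α₂ : ℝ), u₁ ≠ 0 ∧ u₂ ≠ 0 ∧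
      {x : E | ⟪u₁, x⟫_ℝ = α₁} ≠ {x | ⟪u₂, x⟫_ℝ = α₂} ∧
      (∀ i : Fin d, ({x | ⟪u₁, x⟫_ℝ = α₁} ∩ K i).Nonempty ∧ K i ⊆ {x | α₁ ≤ ⟪u₁, x⟫_ℝ}) ∧
      (∀ i : Fin d, ({x | ⟪u₂, x⟫_ℝ = α₂} ∩ K i).Nonempty ∧ K i ⊆ {x | α₂ ≤ ⟪u₂, x⟫_ℝ}) := by
  obtain ⟨i₀, -⟩ := Set.nonempty_iUnion.1 (AffineSubspace.nonempty_of_affineSpan_eq_top ℝ E E hspan)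
  have : NeZero d := ⟨i₀.pos.ne'⟩
  have hV : finrank ℝ (E × ℝ) = d + 1 := by rw [finrank_prod, hE, finrank_self]
  obtain ⟨ω, hω⟩ : ∃ ω : (E × ℝ) [⋀^Fin (d + 1)]→ₗ[ℝ] ℝ, ω ≠ 0 :=
    ⟨_, (finBasisOfFinrankEq ℝ (E × ℝ) hV).det_ne_zero⟩
  obtain ⟨z, hz, u₁, α₁, hu₁, hf₁, h₁⟩ := exists_supporting_hyperplane hE hcomp hconv hne hind hω
  obtain ⟨w, hw, u₂, α₂, hu₂, hf₂, h₂⟩ :=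
    exists_supporting_hyperplane hE hcomp hconv hne hind (neg_ne_zero.2 hω)
  exact ⟨u₁, u₂, α₁, α₂, hu₁, hu₂, hyperplane_ne_of_neg hE hconv hind hspan hω hz hw hu₁ hf₁ hf₂
    (fun i ↦ (h₁ i).2) fun i ↦ (h₂ i).2, h₁, h₂⟩

end Affine

namespace StronglySeparated

lemma affineIndependent {d m : ℕ} {S : Fin m → Set (EuclideanSpace ℝ (Fin d))}
    (hS : StronglySeparated S) {x : Fin m → EuclideanSpace ℝ (Fin d)}
    (hx : x ∈ Set.univ.pi S) : AffineIndependent ℝ x := by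
  classical
  rw [affineIndependent_iff]
  intro s c hc hcx
  obtain ⟨u, α, -, hneg, hpos⟩ := hS {i | c i < 0}
  have hterm_pos {i : Fin m} (hi : c i ≠ 0) : 0 < c i * (⟪u, x i⟫_ℝ - α) := by
    rcases hi.lt_or_gt with h | h
    · exact mul_pos_of_neg_of_neg h (sub_neg.2 (hneg i (by simpa using h) _ (hx i trivial)))
    · exact mul_pos h (sub_pos.2 (hpos i (by simpa using h.le) _ (hx i trivial)))
  have hterm_nonneg (i : Fin m) : 0 ≤ c i * (⟪u, x i⟫_ℝ - α) := by
    rcases eq_or_ne (c i) 0 with hi | hi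
    · simp [hi]
    · exact (hterm_pos hi).le
  have hsum : ∑ i ∈ s, c i * (⟪u, x i⟫_ℝ - α) = 0 := by
    have hu : ⟪u, ∑ i ∈ s, c i • x i⟫_ℝ = 0 := by rw [hcx, inner_zero_right]
    simp only [inner_sum, inner_smul_right] at hu
    simp only [mul_sub, Finset.sum_sub_distrib, ← Finset.sum_mul, hu, hc, zero_mul, sub_zero]
  intro i hi
  by_contra hci
  exact (hterm_pos hci).ne'
    ((Finset.sum_eq_zero_iff_of_nonneg fun i _ ↦ hterm_nonneg i).1 hsum i hi)

lemma affineSpan_iUnion_eq_top {d : ℕ} {K : Fin d → Set (EuclideanSpace ℝ (Fin d))}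
    (hK : StronglySeparated K) (hint : ∀ i, (interior (K i)).Nonempty) :
    affineSpan ℝ (⋃ i, K i) = ⊤ := by
  obtain ⟨u, -, hu, -⟩ := hK ∅
  obtain ⟨i, -⟩ : ∃ i, u i ≠ 0 := by
    by_contra! h
    exact hu (PiLp.ext h)
  exact affineSpan_eq_top_of_nonempty_interior <|
    (hint i).mono <| interior_mono <|
      (Set.subset_iUnion K i).trans (subset_convexHull ℝ _)

end StronglySeparated

/-- For a strongly separated family of `d` convex bodies in `ℝ^d`, there exist two
distinct affine hyperplanes, each tangent to every body and containing every body in its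
closed nonnegative side. -/
theorem two_sandwiching_tangents_convex_bodies {d : ℕ}
    (K : Fin d → Set (EuclideanSpace ℝ (Fin d)))
    (hcomp : ∀ i, IsCompact (K i)) (hconv : ∀ i, Convex ℝ (K i))
    (hint : ∀ i, (interior (K i)).Nonempty)
    (hsep : StronglySeparated K) :
    ∃ (u₁ u₂ : EuclideanSpace ℝ (Fin d)) (α₁ α₂ : ℝ), u₁ ≠ 0 ∧ u₂ ≠ 0 ∧
      {x : EuclideanSpace ℝ (Fin d) | ⟪u₁, x⟫_ℝ = α₁} ≠ {x | ⟪u₂, x⟫_ℝ = α₂} ∧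
      (∀ i : Fin d, ({x | ⟪u₁, x⟫_ℝ = α₁} ∩ K i).Nonempty ∧
        K i ⊆ {x | α₁ ≤ ⟪u₁, x⟫_ℝ}) ∧
      (∀ i : Fin d, ({x | ⟪u₂, x⟫_ℝ = α₂} ∩ K i).Nonempty ∧
        K i ⊆ {x | α₂ ≤ ⟪u₂, x⟫_ℝ}) := by
  exact two_sandwiching_tangents_convex_bodies_general finrank_euclideanSpace_fin hcomp hconv
    (fun i ↦ (hint i).mono interior_subset) (fun _ ↦ hsep.affineIndependent)
    (hsep.affineSpan_iUnion_eq_top hint)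
end

section
/- Let C₁,…,C_d be a strongly separated family of compact sets in ℝ^d such that for each i the convex hull of Cᵢ has nonempty interior. Then the collection of affine hyperplanes of ℝ^d that are tangent to every Cᵢ (that is, sets H = {x : ⟨u,x⟩ = α} for some nonzero u and α, such that for every i, H ∩ Cᵢ ≠ ∅ and Cᵢ lies in one of the two closed half-spaces bounded by H) has exactly 2^d elements. -/
open scoped InnerProductSpace

/-!
An affine hyperplane of `E` through points `p₁, …, p_d` is cut out by the covector
`v ↦ det (v, x₁, …, x_d)` on `ℝ × E`, where `xᵢ = (1, pᵢ)`. Strong separation makes `x₁, …, x_d`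
linearly independent whenever each `pᵢ` lies in the closed convex hull of `Cᵢ`, and a common tangent
is such a hyperplane together with a sign for each `i`, the side on which `Cᵢ` lies. So it suffices
that every sign vector is realised by exactly one hyperplane, and different ones by different
hyperplanes.

* Uniqueness: let `φ`, `ψ` be the covectors of `x`, `y`, with `φ (yᵢ) * ψ (xᵢ) ≥ 0` for all `i`.
  One can move each `xᵢ` to `yᵢ` along a segment, at a suitable speed, so that at time `t` it lies
  in the kernel of `(1 - t) • φ - t • ψ`. If `φ v > 0 > ψ v`, then the determinant of `v` and the
  moving vectors cannot vanish on the way, hence cannot change sign. So there is no such `v`, and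
  `φ` and `ψ` are positive multiples of each other.
* Existence: the sides are prescribed one convex set at a time. Any `p` in the next set `K` extends
  to a transversal with the sides prescribed so far, whose covector `f p` vanishes at `p`. By
  uniqueness the half-spaces `{f p ≤ 0}`, traced on `K`, form a chain; a point `y` common to all of
  them satisfies `f y ≥ 0` on `K`.
* Different signs give different hyperplanes because a covector with both signs on `Cᵢ` vanishes on
  the affine span of `Cᵢ`, which is everything.
-/

open Module Set

theorem pos_of_isPreconnected {X : Type*} [TopologicalSpace X] {s : Set X}
    (hs : IsPreconnected s) {g : X → ℝ} (hg : ContinuousOn g s) (hg0 : ∀ z ∈ s, g z ≠ 0)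
    {x y : X} (hx : x ∈ s) (hy : y ∈ s) (hgx : 0 < g x) : 0 < g y := by
  by_contra! hgy
  obtain ⟨z, hz, hgz⟩ := hs.intermediate_value hy hx hg ⟨hgy, hgx.le⟩
  exact hg0 z hz hgz

theorem mul_nonneg_of_units_smul_nonneg (s : ℤˣ) {a b : ℝ} (ha : 0 ≤ s • a) (hb : 0 ≤ s • b) :
    0 ≤ a * b := by
  rcases Int.units_eq_one_or s with rfl | rfl
  · exact mul_nonneg (by simpa using ha) (by simpa using hb)
  · exact mul_nonneg_of_nonpos_of_nonpos (by simpa using ha) (by simpa using hb)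

theorem eq_zero_of_units_smul_nonneg {s t : ℤˣ} (hst : s ≠ t) {a : ℝ} (hs : 0 ≤ s • a)
    (ht : 0 ≤ t • a) : a = 0 := by
  rw [Int.units_ne_iff_eq_neg] at hst
  rw [hst, Units.neg_smul, neg_nonneg] at hs
  exact (smul_eq_zero_iff_eq t).1 (hs.antisymm ht)

theorem exists_units_smul_nonneg_iff {X : Type*} {S : Set X} {g : X → ℝ} :
    (∃ s : ℤˣ, ∀ p ∈ S, 0 ≤ s • g p) ↔ (∀ p ∈ S, 0 ≤ g p) ∨ ∀ p ∈ S, g p ≤ 0 := by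
  constructor
  · rintro ⟨s, hs⟩
    rcases Int.units_eq_one_or s with rfl | rfl
    · exact .inl (by simpa using hs)
    · exact .inr (by simpa using hs)
  · rintro (h | h)
    · exact ⟨1, by simpa using h⟩
    · exact ⟨-1, by simpa using h⟩

theorem exists_units_smul_nonneg_of_mul {X : Type*} {S : Set X} {g : X → ℝ} {c : ℝ} (hc : c ≠ 0)
    (h : ∃ s : ℤˣ, ∀ p ∈ S, 0 ≤ s • (c * g p)) : ∃ s : ℤˣ, ∀ p ∈ S, 0 ≤ s • g p := by
  obtain ⟨s, hs⟩ := h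
  simp only [← mul_smul_comm] at hs
  rcases hc.lt_or_gt with hc | hc
  · refine ⟨-s, fun p hp ↦ ?_⟩
    rw [Units.neg_smul, neg_nonneg]
    exact nonpos_of_mul_nonneg_right (hs p hp) hc
  · exact ⟨s, fun p hp ↦ (mul_nonneg_iff_of_pos_left hc).1 (hs p hp)⟩

theorem exists_eq_smul_of_ker_le_ker {𝕜 V : Type*} [Field 𝕜] [AddCommGroup V] [Module 𝕜 V]
    {φ ψ : Dual 𝕜 V} (h : LinearMap.ker φ ≤ LinearMap.ker ψ) : ∃ c : 𝕜, ψ = c • φ := by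
  have hψ := mem_span_of_iInf_ker_le_ker (L := fun _ : Unit ↦ φ) (K := ψ) (by simpa using h)
  rw [range_const, Submodule.mem_span_singleton] at hψ
  exact hψ.imp fun _ ↦ Eq.symm

theorem exists_pos_neg_of_not_sameRay {𝕜 V : Type*} [Field 𝕜] [LinearOrder 𝕜]
    [IsStrictOrderedRing 𝕜] [AddCommGroup V] [Module 𝕜 V] {φ ψ : Dual 𝕜 V}
    (h : ¬SameRay 𝕜 φ ψ) : ∃ v, 0 < φ v ∧ ψ v < 0 := by
  by_contra! hnonneg
  have hφ : φ ≠ 0 := fun h0 ↦ h (h0 ▸ SameRay.zero_left ψ)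
  obtain ⟨v, hv⟩ : ∃ v, φ v = 1 := LinearMap.surjective hφ 1
  have hker : LinearMap.ker φ ≤ LinearMap.ker ψ := fun w hw ↦ by
    by_contra hψw
    have := hnonneg (v - ((ψ v + 1) / ψ w) • w) (by simp [hv, LinearMap.mem_ker.1 hw])
    rw [map_sub, map_smul, smul_eq_mul, div_mul_cancel₀ _ hψw] at this
    linarith
  obtain ⟨c, rfl⟩ := exists_eq_smul_of_ker_le_ker hker
  have hc : 0 ≤ c := by simpa [hv] using hnonneg v (by simp [hv])
  exact h (SameRay.sameRay_nonneg_smul_right φ hc)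

section Selection

variable {V : Type*} [AddCommGroup V] [Module ℝ V] {K : Set V} {f : V → Dual ℝ V}

theorem apply_nonpos_of_apply_pos_of_apply_neg (hK : Convex ℝ K) (hne : ∀ y ∈ K, f y ≠ 0)
    (hself : ∀ y ∈ K, f y y = 0)
    (hray : ∀ y ∈ K, ∀ z ∈ K, 0 ≤ f y z * f z y → SameRay ℝ (f y) (f z))
    {y₁ y₂ z : V} (h₁ : y₁ ∈ K) (h₂ : y₂ ∈ K) (hz : z ∈ K) (h₁₂ : 0 < f y₁ y₂)
    (h₂₁ : f y₂ y₁ < 0) (h₁z : f y₁ z ≤ 0) : f y₂ z ≤ 0 := by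
  by_contra! h₂z
  -- At the zero `p` of `f y₁` on the segment from `y₂` to `z`, `f p` is a positive multiple of
  -- `f y₁`, hence positive at `y₂`, and thereby also a positive multiple of `f y₂`.
  have hden : 0 < f y₁ y₂ - f y₁ z := by linarith
  set t := f y₁ y₂ / (f y₁ y₂ - f y₁ z) with ht
  have ht0 : 0 < t := by positivity
  have ht1 : t ≤ 1 := (div_le_one hden).2 (by linarith)
  set p := AffineMap.lineMap y₂ z t with hp
  have hpK : p ∈ K := hK.lineMap_mem h₂ hz ⟨ht0.le, ht1⟩
  have h₁p : f y₁ p = 0 := by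
    simp only [hp, AffineMap.lineMap_apply_module', map_add, map_smul, map_sub, smul_eq_mul, ht]
    field_simp
    ring
  have h₂p : 0 < f y₂ p := by
    simp only [hp, AffineMap.lineMap_apply_module', map_add, map_smul, map_sub, smul_eq_mul,
      hself y₂ h₂, sub_zero, add_zero]
    positivity
  obtain ⟨c, hc, hcp⟩ := (hray y₁ h₁ p hpK (by simp [h₁p])).exists_pos_left (hne _ h₁) (hne _ hpK)
  have hp₂ : 0 < f p y₂ := by
    rw [← hcp]
    exact mul_pos hc h₁₂
  obtain ⟨c', -, hc₂⟩ :=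
    (hray p hpK y₂ h₂ (mul_pos hp₂ h₂p).le).exists_pos_left (hne _ hpK) (hne _ h₂)
  simp [← hc₂, ← hcp, hself y₁ h₁] at h₂₁

theorem exists_forall_apply_nonneg [TopologicalSpace V] [T2Space V]
    (hK : Convex ℝ K) (hKc : IsCompact K) (hKne : K.Nonempty) (hcont : ∀ y ∈ K, Continuous (f y))
    (hne : ∀ y ∈ K, f y ≠ 0) (hself : ∀ y ∈ K, f y y = 0)
    (hray : ∀ y ∈ K, ∀ z ∈ K, 0 ≤ f y z * f z y → SameRay ℝ (f y) (f z)) :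
    ∃ y ∈ K, ∀ z ∈ K, 0 ≤ f y z := by
  have htotal (y₁ y₂ : K) : (∀ z ∈ K, f y₁ z ≤ 0 → f y₂ z ≤ 0) ∨
      (∀ z ∈ K, f y₂ z ≤ 0 → f y₁ z ≤ 0) := by
    rcases le_or_gt 0 (f y₁ y₂ * f y₂ y₁) with h | h
    · obtain ⟨c, hc, hcy⟩ := (hray _ y₁.2 _ y₂.2 h).exists_pos_left (hne _ y₁.2) (hne _ y₂.2)
      refine .inl fun z _ hz ↦ ?_
      rw [← hcy]
      exact mul_nonpos_of_nonneg_of_nonpos hc.le hz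
    · rcases mul_neg_iff.1 h with ⟨h₁₂, h₂₁⟩ | ⟨h₁₂, h₂₁⟩
      · exact .inl fun z hz ↦
          apply_nonpos_of_apply_pos_of_apply_neg hK hne hself hray y₁.2 y₂.2 hz h₁₂ h₂₁
      · exact .inr fun z hz ↦
          apply_nonpos_of_apply_pos_of_apply_neg hK hne hself hray y₂.2 y₁.2 hz h₂₁ h₁₂
  have hclosed (y : K) : IsClosed {z | f y z ≤ 0} := isClosed_le (hcont y y.2) continuous_const
  have : Nonempty K := hKne.to_subtype
  obtain ⟨y, hy⟩ := IsCompact.nonempty_iInter_of_directed_nonempty_isCompact_isClosed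
    (fun y : K ↦ K ∩ {z | f y z ≤ 0})
    (fun y₁ y₂ ↦ (htotal y₁ y₂).elim
      (fun h ↦ ⟨y₁, subset_rfl, fun z hz ↦ ⟨hz.1, h z hz.1 hz.2⟩⟩)
      (fun h ↦ ⟨y₂, fun z hz ↦ ⟨hz.1, h z hz.1 hz.2⟩, subset_rfl⟩))
    (fun y ↦ ⟨y, y.2, (hself y y.2).le⟩) (fun y ↦ hKc.inter_right (hclosed y))
    (fun y ↦ hKc.isClosed.inter (hclosed y))
  simp only [mem_iInter, mem_inter_iff, mem_ofPred_eq] at hy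
  have hyK : y ∈ K := (hy (Classical.arbitrary K)).1
  refine ⟨y, hyK, fun z hz ↦ ?_⟩
  by_contra! hyz
  obtain ⟨c, -, hc⟩ := (hray y hyK z hz
    (mul_nonneg_of_nonpos_of_nonpos hyz.le (hy ⟨z, hz⟩).2)).exists_pos_right (hne _ hyK) (hne _ hz)
  simp [hc, hself z hz] at hyz

theorem exists_forall_units_smul_apply_nonneg [TopologicalSpace V] [T2Space V]
    (hK : Convex ℝ K) (hKc : IsCompact K) (hKne : K.Nonempty)
    (hcont : ∀ y ∈ K, Continuous (f y)) (hne : ∀ y ∈ K, f y ≠ 0) (hself : ∀ y ∈ K, f y y = 0)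
    (hray : ∀ y ∈ K, ∀ z ∈ K, 0 ≤ f y z * f z y → SameRay ℝ (f y) (f z)) (s : ℤˣ) :
    ∃ y ∈ K, ∀ z ∈ K, 0 ≤ s • f y z := by
  rcases Int.units_eq_one_or s with rfl | rfl
  · simpa using exists_forall_apply_nonneg hK hKc hKne hcont hne hself hray
  · simpa using exists_forall_apply_nonneg (f := fun y ↦ -f y) hK hKc hKne
      (fun y hy ↦ (hcont y hy).neg) (by simpa using hne) (by simpa using hself)
      (by simpa using hray)

end Selection

section Conormal

variable {𝕜 V : Type*} [Field 𝕜] [AddCommGroup V] [Module 𝕜 V] {d : ℕ} (b : Basis (Fin (d + 1)) 𝕜 V)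

/-- The covector `v ↦ det (v, x₁, …, x_d)`, that is, the generalised cross product of `d` vectors in
a space of dimension `d + 1` oriented by a basis `b`. It cuts out the hyperplane spanned by the
`xᵢ` and co-orients it. -/
noncomputable def conormal (x : Fin d → V) : Dual 𝕜 V where
  toFun v := b.det (Fin.cons v x)
  map_add' := b.det.map_vecCons_add x
  map_smul' := b.det.map_vecCons_smul x

theorem conormal_apply (x : Fin d → V) (v : V) : conormal b x v = b.det (Fin.cons v x) := rfl

@[simp]
theorem conormal_apply_self (x : Fin d → V) (i : Fin d) : conormal b x (x i) = 0 :=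
  b.det.map_eq_zero_of_eq (Fin.cons (x i) x) (i := 0) (j := i.succ) (by simp)
    (Fin.succ_ne_zero i).symm

variable {b}

theorem conormal_apply_ne_zero {x : Fin d → V} (hx : LinearIndependent 𝕜 x) {v : V}
    (hv : v ∉ Submodule.span 𝕜 (range x)) : conormal b x v ≠ 0 := by
  have hcons : LinearIndependent 𝕜 (Fin.cons v x : Fin (d + 1) → V) :=
    linearIndependent_finCons.2 ⟨hx, hv⟩
  have : FiniteDimensional 𝕜 V := b.finiteDimensional_of_finite
  have hcard : Fintype.card (Fin (d + 1)) = finrank 𝕜 V := (finrank_eq_card_basis b).symm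
  simpa [conormal_apply] using
    (b.isUnit_det (basisOfLinearIndependentOfCardEqFinrank hcons hcard)).ne_zero

theorem conormal_apply_ne_zero_of_forall_apply_eq_zero {x : Fin d → V}
    (hx : LinearIndependent 𝕜 x) {φ : Dual 𝕜 V} (hφ : ∀ i, φ (x i) = 0) {v : V} (hv : φ v ≠ 0) :
    conormal b x v ≠ 0 := by
  have hspan : Submodule.span 𝕜 (range x) ≤ LinearMap.ker φ :=
    Submodule.span_le.2 (range_subset_iff.2 hφ)
  exact conormal_apply_ne_zero hx fun h ↦ hv (hspan h)

theorem exists_eq_smul_conormal {x : Fin d → V} (hx : LinearIndependent 𝕜 x) {φ : Dual 𝕜 V}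
    (hφ : ∀ i, φ (x i) = 0) : ∃ c : 𝕜, φ = c • conormal b x :=
  exists_eq_smul_of_ker_le_ker fun _ hv ↦ by_contra fun h ↦
    conormal_apply_ne_zero_of_forall_apply_eq_zero hx hφ h hv

theorem conormal_ne_zero {x : Fin d → V} (hx : LinearIndependent 𝕜 x) : conormal b x ≠ 0 := by
  obtain ⟨v, hv⟩ : ∃ v, v ∉ Submodule.span 𝕜 (range x) := by
    by_contra! h
    have hcard := finrank_range_le_card (R := 𝕜) x
    rw [Set.finrank, (Submodule.eq_top_iff').2 h, finrank_top, finrank_eq_card_basis b] at hcard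
    simp at hcard
  exact fun h ↦ conormal_apply_ne_zero (b := b) hx hv (by simp [h])

theorem continuous_conormal_apply {𝕜 V : Type*} [NontriviallyNormedField 𝕜] [CompleteSpace 𝕜]
    [AddCommGroup V] [Module 𝕜 V] [TopologicalSpace V] [IsTopologicalAddGroup V]
    [ContinuousSMul 𝕜 V] [T2Space V] {b : Basis (Fin (d + 1)) 𝕜 V} (v : V) :
    Continuous fun x ↦ conormal b x v := by
  have : FiniteDimensional 𝕜 V := b.finiteDimensional_of_finite
  simp only [conormal_apply, Basis.det_apply]
  refine Continuous.matrix_det (continuous_matrix fun i j ↦ ?_)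
  refine (b.coord i).continuous_of_finiteDimensional.comp ?_
  refine Fin.cases ?_ (fun j ↦ ?_) j
  · exact continuous_const
  · exact continuous_apply j

end Conormal

theorem exists_continuousOn_mul_eq {a b : ℝ} (hab : 0 ≤ a * b) :
    ∃ s : ℝ → ℝ, ContinuousOn s (Icc 0 1) ∧
      ∀ t ∈ Icc (0 : ℝ) 1, s t ∈ Icc 0 1 ∧ (1 - t) * (s t * a) = t * ((1 - s t) * b) := by
  rcases hab.eq_or_lt with hab | hab
  · rcases mul_eq_zero.1 hab.symm with rfl | rfl
    · exact ⟨fun _ ↦ 1, continuousOn_const, by simp⟩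
    · exact ⟨fun _ ↦ 0, continuousOn_const, by simp⟩
  · have hb : 0 < b ^ 2 := by
      have := right_ne_zero_of_mul hab.ne'
      positivity
    have hden {t : ℝ} (ht : t ∈ Icc (0 : ℝ) 1) : 0 < (1 - t) * (a * b) + t * b ^ 2 := by
      rcases ht.1.eq_or_lt with rfl | h0
      · simpa using hab
      · nlinarith [mul_pos h0 hb, ht.2]
    -- `s` solves the equation, with numerator and denominator multiplied by `b` to be nonnegative.
    refine ⟨fun t ↦ t * b ^ 2 / ((1 - t) * (a * b) + t * b ^ 2),
      ContinuousOn.div (by fun_prop) (by fun_prop) fun t ht ↦ (hden ht).ne',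
      fun t ht ↦ ⟨⟨?_, ?_⟩, ?_⟩⟩
    · have := hden ht
      have := ht.1
      positivity
    · rw [div_le_one (hden ht)]
      nlinarith [ht.2]
    · have := (hden ht).ne'
      rw [one_sub_div this]
      field_simp
      ring

section Uniqueness

variable {V : Type*} [AddCommGroup V] [Module ℝ V] [TopologicalSpace V] [IsTopologicalAddGroup V]
  [ContinuousSMul ℝ V] [T2Space V] {d : ℕ} {b : Basis (Fin (d + 1)) ℝ V} {K : Fin d → Set V}

theorem conormal_apply_pos_of_forall_apply_eq_zero (hconv : ∀ i, Convex ℝ (K i))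
    (hind : ∀ x ∈ univ.pi K, LinearIndependent ℝ x) {φ : Dual ℝ V} {x y : Fin d → V}
    (hx : x ∈ univ.pi K) (hy : y ∈ univ.pi K) (hφx : ∀ i, φ (x i) = 0) (hφy : ∀ i, φ (y i) = 0)
    {v : V} (hv : φ v ≠ 0) (hpos : 0 < conormal b x v) : 0 < conormal b y v := by
  have hs : Convex ℝ (univ.pi fun i ↦ K i ∩ {z | φ z = 0}) :=
    convex_pi fun i _ ↦ (hconv i).inter (convex_hyperplane φ.isLinear 0)
  refine pos_of_isPreconnected hs.isPreconnected (continuous_conormal_apply v).continuousOn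
    (fun z hz ↦ ?_) (fun i hi ↦ ⟨hx i hi, hφx i⟩) (fun i hi ↦ ⟨hy i hi, hφy i⟩) hpos
  exact conormal_apply_ne_zero_of_forall_apply_eq_zero (hind z fun i hi ↦ (hz i hi).1)
    (fun i ↦ (hz i trivial).2) hv

theorem sameRay_conormal (hconv : ∀ i, Convex ℝ (K i))
    (hind : ∀ x ∈ univ.pi K, LinearIndependent ℝ x) {x y : Fin d → V} (hx : x ∈ univ.pi K)
    (hy : y ∈ univ.pi K) (hxy : ∀ i, 0 ≤ conormal b x (y i) * conormal b y (x i)) :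
    SameRay ℝ (conormal b x) (conormal b y) := by
  by_contra hray
  obtain ⟨v, hxv, hyv⟩ := exists_pos_neg_of_not_sameRay hray
  choose s hs hsI hst using fun i ↦ exists_continuousOn_mul_eq (hxy i)
  let p (t : ℝ) (i : Fin d) : V := AffineMap.lineMap (x i) (y i) (s i t)
  let φ (t : ℝ) : Dual ℝ V := (1 - t) • conormal b x - t • conormal b y
  have hpK {t : ℝ} (ht : t ∈ Icc (0 : ℝ) 1) : p t ∈ univ.pi K := fun i hi ↦
    (hconv i).lineMap_mem (hx i hi) (hy i hi) (hsI i t ht)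
  have hφp {t : ℝ} (ht : t ∈ Icc (0 : ℝ) 1) (i : Fin d) : φ t (p t i) = 0 := by
    simp [φ, p, AffineMap.lineMap_apply_module, hst i t ht]
  have hφv {t : ℝ} (ht : t ∈ Icc (0 : ℝ) 1) : 0 < φ t v := by
    simpa [φ, sub_eq_add_neg] using
      convex_Ioi (0 : ℝ) hxv (neg_pos.2 hyv) (sub_nonneg.2 ht.2) ht.1 (by ring)
  have hcont : ContinuousOn (fun t ↦ conormal b (p t) v) (Icc 0 1) :=
    (continuous_conormal_apply v).comp_continuousOn (continuousOn_pi.2 fun i ↦ by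
      simp only [p, AffineMap.lineMap_apply_module]
      fun_prop)
  have h0 : (0 : ℝ) ∈ Icc (0 : ℝ) 1 := by simp
  have h1 : (1 : ℝ) ∈ Icc (0 : ℝ) 1 := by simp
  have hp0 : 0 < conormal b (p 0) v :=
    conormal_apply_pos_of_forall_apply_eq_zero hconv hind hx (hpK h0) (φ := conormal b x) (by simp)
      (fun i ↦ by simpa [φ] using hφp h0 i) hxv.ne' hxv
  have hp1 : 0 < conormal b (p 1) v :=
    pos_of_isPreconnected isPreconnected_Icc hcont (fun t ht ↦
      conormal_apply_ne_zero_of_forall_apply_eq_zero (hind _ (hpK ht)) (hφp ht) (hφv ht).ne')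
      h0 h1 hp0
  have hy1 : 0 < conormal b y v :=
    conormal_apply_pos_of_forall_apply_eq_zero hconv hind (hpK h1) hy (φ := conormal b y)
      (fun i ↦ by simpa [φ] using hφp h1 i) (by simp) hyv.ne hp1
  exact hyv.not_gt hy1

theorem exists_pos_smul_conormal_eq (hconv : ∀ i, Convex ℝ (K i))
    (hind : ∀ x ∈ univ.pi K, LinearIndependent ℝ x) {x y : Fin d → V} (hx : x ∈ univ.pi K)
    (hy : y ∈ univ.pi K) (hxy : ∀ i, 0 ≤ conormal b x (y i) * conormal b y (x i)) :
    ∃ c : ℝ, 0 < c ∧ c • conormal b x = conormal b y :=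
  (sameRay_conormal hconv hind hx hy hxy).exists_pos_left
    (conormal_ne_zero (hind x hx)) (conormal_ne_zero (hind y hy))

end Uniqueness

/-- The vectors `x i ∈ K i` span a hyperplane that supports every `K i`, from the side prescribed by
the sign `σ i`. -/
structure IsSupportingTransversal_s9 {V : Type*} [AddCommGroup V] [Module ℝ V] {d : ℕ}
    (b : Basis (Fin (d + 1)) ℝ V) (K : Fin d → Set V) (σ : Fin d → ℤˣ) (x : Fin d → V) : Prop where
  mem : x ∈ univ.pi K
  nonneg : ∀ i, ∀ z ∈ K i, 0 ≤ σ i • conormal b x z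

section Existence

variable {V : Type*} [AddCommGroup V] [Module ℝ V] [TopologicalSpace V] [IsTopologicalAddGroup V]
  [ContinuousSMul ℝ V] [T2Space V] {d : ℕ} {b : Basis (Fin (d + 1)) ℝ V} {K : Fin d → Set V}

theorem exists_forall_mem_smul_conormal_nonneg (hconv : ∀ i, Convex ℝ (K i))
    (hcomp : ∀ i, IsCompact (K i)) (hind : ∀ x ∈ univ.pi K, LinearIndependent ℝ x)
    (σ : Fin d → ℤˣ) (s : Finset (Fin d)) {x : Fin d → V} (hx : x ∈ univ.pi K) :
    ∃ y ∈ univ.pi K, (∀ i ∉ s, y i = x i) ∧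
      ∀ i ∈ s, ∀ z ∈ K i, 0 ≤ σ i • conormal b y z := by
  induction s using Finset.induction_on generalizing x with
  | empty => exact ⟨x, hx, by simp⟩
  | insert k s hk ih =>
    have hupdate {p : V} (hp : p ∈ K k) : Function.update x k p ∈ univ.pi K :=
      (update_mem_pi_iff_of_mem hx).2 fun _ ↦ hp
    choose! y hyK hys hy using fun p (hp : p ∈ K k) ↦ ih (hupdate hp)
    have hyk {p : V} (hp : p ∈ K k) : y p k = p := by simp [hys p hp k hk]
    have hyi {p : V} (hp : p ∈ K k) {i : Fin d} (hi : i ∉ insert k s) : y p i = x i := by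
      rw [Finset.mem_insert, not_or] at hi
      simp [hys p hp i hi.2, hi.1]
    have hself (p : V) (hp : p ∈ K k) : conormal b (y p) p = 0 := by
      simpa only [hyk hp] using conormal_apply_self b (y p) k
    have hray (p : V) (hp : p ∈ K k) (q : V) (hq : q ∈ K k)
        (hpq : 0 ≤ conormal b (y p) q * conormal b (y q) p) :
        SameRay ℝ (conormal b (y p)) (conormal b (y q)) := by
      refine sameRay_conormal hconv hind (hyK p hp) (hyK q hq) fun i ↦ ?_
      by_cases hi : i ∈ insert k s
      · rcases Finset.mem_insert.1 hi with rfl | his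
        · rwa [hyk hp, hyk hq]
        · exact mul_nonneg_of_units_smul_nonneg (σ i) (hy p hp i his _ (hyK q hq i trivial))
            (hy q hq i his _ (hyK p hp i trivial))
      · rw [hyi hq hi, ← hyi hp hi, conormal_apply_self, zero_mul]
    have : FiniteDimensional ℝ V := b.finiteDimensional_of_finite
    obtain ⟨p, hp, hpk⟩ := exists_forall_units_smul_apply_nonneg (hconv k) (hcomp k)
      ⟨x k, hx k trivial⟩ (fun p _ ↦ (conormal b (y p)).continuous_of_finiteDimensional)
      (fun p hp ↦ conormal_ne_zero (hind _ (hyK p hp))) hself hray (σ k)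
    refine ⟨y p, hyK p hp, fun i hi ↦ hyi hp hi, fun i hi ↦ ?_⟩
    rcases Finset.mem_insert.1 hi with rfl | his
    · exact hpk
    · exact hy p hp i his

theorem exists_isSupportingTransversal_s9 (hconv : ∀ i, Convex ℝ (K i))
    (hcomp : ∀ i, IsCompact (K i)) (hne : ∀ i, (K i).Nonempty)
    (hind : ∀ x ∈ univ.pi K, LinearIndependent ℝ x) (σ : Fin d → ℤˣ) :
    ∃ x, IsSupportingTransversal_s9 b K σ x := by
  obtain ⟨x, hx⟩ := univ_pi_nonempty_iff.2 hne
  obtain ⟨y, hy, -, hyσ⟩ :=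
    exists_forall_mem_smul_conormal_nonneg hconv hcomp hind σ Finset.univ hx
  exact ⟨y, hy, fun i ↦ hyσ i (Finset.mem_univ i)⟩

end Existence

section ClosedConvexHull

variable {E : Type*} [AddCommGroup E] [Module ℝ E] [TopologicalSpace E] {C : Set E}

theorem le_apply_of_mem_closedConvexHull {f : E →L[ℝ] ℝ} {a : ℝ} (h : ∀ p ∈ C, a ≤ f p) {p : E}
    (hp : p ∈ closedConvexHull ℝ C) : a ≤ f p :=
  closedConvexHull_min h (convex_halfSpace_ge f.isLinear a)
    (isClosed_le continuous_const f.continuous) hp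

theorem lt_apply_of_mem_closedConvexHull (hC : IsCompact C) {f : E →L[ℝ] ℝ} {a : ℝ}
    (h : ∀ p ∈ C, a < f p) {p : E} (hp : p ∈ closedConvexHull ℝ C) : a < f p := by
  rcases C.eq_empty_or_nonempty with rfl | hne
  · have : p ∈ (∅ : Set E) := closedConvexHull_min subset_rfl convex_empty isClosed_empty hp
    exact this.elim
  · obtain ⟨q, hq, hmin⟩ := hC.exists_isMinOn hne f.continuous.continuousOn
    exact (h q hq).trans_le (le_apply_of_mem_closedConvexHull hmin hp)

end ClosedConvexHull

theorem isCompact_closedConvexHull {E : Type*} [NormedAddCommGroup E] [NormedSpace ℝ E]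
    [ProperSpace E] {C : Set E} (hC : IsCompact C) : IsCompact (closedConvexHull ℝ C) := by
  rw [closedConvexHull_eq_closure_convexHull]
  exact (isBounded_convexHull.2 hC.isBounded).isCompact_closure

section StronglySeparated

variable {d m : ℕ} {S : Fin m → Set (EuclideanSpace ℝ (Fin d))}

theorem StronglySeparated.closedConvexHull (hS : ∀ i, IsCompact (S i))
    (hsep : StronglySeparated S) : StronglySeparated fun i ↦ closedConvexHull ℝ (S i) := by
  intro I
  obtain ⟨u, α, hu, hlt, hgt⟩ := hsep I
  refine ⟨u, α, hu, fun i hi x hx ↦ ?_, fun i hi x hx ↦ ?_⟩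
  · have hneg : -α < innerSL ℝ (-u) x :=
      lt_apply_of_mem_closedConvexHull (hS i) (fun y hy ↦ by simpa using hlt i hi y hy) hx
    simpa using hneg
  · exact lt_apply_of_mem_closedConvexHull (f := innerSL ℝ u) (hS i) (hgt i hi) hx

theorem StronglySeparated.affineIndependent_s9 (hsep : StronglySeparated S)
    {p : Fin m → EuclideanSpace ℝ (Fin d)} (hp : p ∈ univ.pi S) : AffineIndependent ℝ p := by
  rw [affineIndependent_iff_of_fintype]
  intro w hw hwp
  rw [Finset.univ.weightedVSub_eq_linear_combination hw] at hwp
  obtain ⟨u, α, -, hlt, hgt⟩ := hsep {i | 0 < w i}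
  have hneg {i : Fin m} (hwi : w i ≠ 0) : w i * (⟪u, p i⟫_ℝ - α) < 0 := by
    rcases hwi.lt_or_gt with hwi | hwi
    · exact mul_neg_of_neg_of_pos hwi
        (sub_pos.2 (hgt i (by simpa using hwi.le) _ (hp i trivial)))
    · exact mul_neg_of_pos_of_neg hwi
        (sub_neg.2 (hlt i (by simpa using hwi) _ (hp i trivial)))
  have hsum : ∑ i, w i * (⟪u, p i⟫_ℝ - α) = 0 := by
    have h := congrArg (fun x ↦ ⟪u, x⟫_ℝ) hwp
    simp only [inner_sum, inner_smul_right, inner_zero_right] at h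
    simp [mul_sub, Finset.sum_sub_distrib, h, ← Finset.sum_mul, hw]
  by_contra! ⟨i, hi⟩
  refine (Finset.sum_neg' (fun j _ ↦ ?_) ⟨i, Finset.mem_univ i, hneg hi⟩).ne hsum
  rcases eq_or_ne (w j) 0 with hj | hj
  · simp [hj]
  · exact (hneg hj).le

theorem StronglySeparated.neZero (hsep : StronglySeparated S) : NeZero d := by
  refine ⟨?_⟩
  rintro rfl
  obtain ⟨u, -, hu, -⟩ := hsep ∅
  exact hu (Subsingleton.elim u 0)

end StronglySeparated

theorem linearIndependent_prodMk_one {𝕜 ι E : Type*} [Ring 𝕜] [AddCommGroup E] [Module 𝕜 E]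
    {p : ι → E} (hp : AffineIndependent 𝕜 p) : LinearIndependent 𝕜 fun i ↦ ((1 : 𝕜), p i) := by
  refine linearIndependent_iff'.2 fun s w hw ↦ ?_
  simp only [Prod.ext_iff, Prod.fst_sum, Prod.snd_sum, Prod.smul_mk, smul_eq_mul, mul_one,
    Prod.fst_zero, Prod.snd_zero] at hw
  exact hp.eq_zero_of_sum_eq_zero hw.1 hw.2

theorem eq_zero_of_affineSpan_eq_top_s9 {𝕜 E : Type*} [CommRing 𝕜] [AddCommGroup E] [Module 𝕜 E]
    {C : Set E} (hC : affineSpan 𝕜 C = ⊤) {φ : Dual 𝕜 (𝕜 × E)} (hφ : ∀ p ∈ C, φ (1, p) = 0) :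
    φ = 0 := by
  let f : E →ᵃ[𝕜] 𝕜 := φ.toAffineMap.comp ((AffineMap.const 𝕜 E 1).prod (AffineMap.id 𝕜 E))
  have hf : f = AffineMap.const 𝕜 E 0 := AffineMap.ext_on hC hφ
  have hzero (p : E) : φ (1, p) = 0 := DFunLike.congr_fun hf p
  refine LinearMap.prod_ext (LinearMap.ext_ring (hzero 0)) (LinearMap.ext fun p ↦ ?_)
  simpa [hzero] using φ.map_sub (1, p) (1, 0)

section Homogenization

variable {E : Type*} [NormedAddCommGroup E] [NormedSpace ℝ E]

/-- The closed convex hull of a subset of an affine space, placed at height one in the vector space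
`ℝ × E` so that affine functions on `E` become covectors. -/
def homogenizedHull (C : Set E) : Set (ℝ × E) := {1} ×ˢ closedConvexHull ℝ C

variable {C : Set E}

theorem convex_homogenizedHull : Convex ℝ (homogenizedHull C) :=
  (convex_singleton 1).prod convex_closedConvexHull

theorem mk_one_mem_homogenizedHull {p : E} (hp : p ∈ C) : (1, p) ∈ homogenizedHull C :=
  ⟨rfl, subset_closedConvexHull hp⟩

theorem linearIndependent_of_mem_pi_homogenizedHull {ι : Type*} {C : ι → Set E}
    (hC : ∀ p ∈ univ.pi fun i ↦ closedConvexHull ℝ (C i), AffineIndependent ℝ p)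
    {x : ι → ℝ × E} (hx : x ∈ univ.pi fun i ↦ homogenizedHull (C i)) : LinearIndependent ℝ x := by
  have hx1 : x = fun i ↦ (1, (x i).2) := funext fun i ↦ Prod.ext (hx i trivial).1 rfl
  rw [hx1]
  exact linearIndependent_prodMk_one (hC _ fun i hi ↦ (hx i hi).2)

variable [FiniteDimensional ℝ E]

theorem isCompact_homogenizedHull (hC : IsCompact C) : IsCompact (homogenizedHull C) :=
  isCompact_singleton.prod (isCompact_closedConvexHull hC)

theorem apply_one_eq_add_apply_inr (φ : Dual ℝ (ℝ × E)) (p : E) :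
    φ (1, p) = φ (1, 0) + (φ ∘ₗ LinearMap.inr ℝ ℝ E).toContinuousLinearMap p := by
  simp [← map_add]

theorem apply_nonneg_of_mem_homogenizedHull {φ : Dual ℝ (ℝ × E)} (h : ∀ p ∈ C, 0 ≤ φ (1, p))
    {z : ℝ × E} (hz : z ∈ homogenizedHull C) : 0 ≤ φ z := by
  obtain ⟨r, p⟩ := z
  obtain ⟨rfl : r = 1, hp⟩ := hz
  rw [apply_one_eq_add_apply_inr, ← neg_le_iff_add_nonneg']
  refine le_apply_of_mem_closedConvexHull (fun q hq ↦ ?_) hp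
  rw [neg_le_iff_add_nonneg', ← apply_one_eq_add_apply_inr]
  exact h q hq

theorem apply_pos_of_mem_homogenizedHull (hC : IsCompact C) {φ : Dual ℝ (ℝ × E)}
    (h : ∀ p ∈ C, 0 < φ (1, p)) {z : ℝ × E} (hz : z ∈ homogenizedHull C) : 0 < φ z := by
  obtain ⟨r, p⟩ := z
  obtain ⟨rfl : r = 1, hp⟩ := hz
  rw [apply_one_eq_add_apply_inr, ← neg_lt_iff_pos_add']
  refine lt_apply_of_mem_closedConvexHull hC (fun q hq ↦ ?_) hp
  rw [neg_lt_iff_pos_add', ← apply_one_eq_add_apply_inr]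
  exact h q hq

end Homogenization

section CommonTangent

variable {E : Type*} [NormedAddCommGroup E] [InnerProductSpace ℝ E]

/-- `H` is an affine hyperplane that meets every `C i` and has each `C i` on one side. -/
def IsCommonTangent {ι : Type*} (C : ι → Set E) (H : Set E) : Prop :=
  ∃ (u : E) (α : ℝ), u ≠ 0 ∧ H = {x | ⟪u, x⟫_ℝ = α} ∧
    ∀ i, (H ∩ C i).Nonempty ∧ (C i ⊆ {x | α ≤ ⟪u, x⟫_ℝ} ∨ C i ⊆ {x | ⟪u, x⟫_ℝ ≤ α})

variable {d : ℕ} {b : Basis (Fin (d + 1)) ℝ (ℝ × E)} {C : Fin d → Set E} {σ τ : Fin d → ℤˣ}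
  {x y : Fin d → ℝ × E}

variable (b) in
/-- The affine hyperplane through the points of `E` that the vectors `xᵢ ∈ {1} × E` represent. -/
def conormalHyperplane (x : Fin d → ℝ × E) : Set E := {p | conormal b x (1, p) = 0}

theorem IsSupportingTransversal_s9.eq_of_conormalHyperplane_eq
    (hspan : ∀ i, affineSpan ℝ (C i) = ⊤)
    (hind : ∀ z ∈ univ.pi fun i ↦ homogenizedHull (C i), LinearIndependent ℝ z)
    (hx : IsSupportingTransversal_s9 b (fun i ↦ homogenizedHull (C i)) σ x)
    (hy : IsSupportingTransversal_s9 b (fun i ↦ homogenizedHull (C i)) τ y)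
    (hxy : conormalHyperplane b x = conormalHyperplane b y) : σ = τ := by
  have hxy0 (i : Fin d) : conormal b x (y i) = 0 := by
    have hyi : y i = (1, (y i).2) := Prod.ext (hy.mem i trivial).1 rfl
    rw [hyi]
    change (y i).2 ∈ conormalHyperplane b x
    rw [hxy]
    simp [conormalHyperplane, ← hyi]
  obtain ⟨c, hc, hcxy⟩ : ∃ c : ℝ, 0 < c ∧ c • conormal b x = conormal b y :=
    exists_pos_smul_conormal_eq (fun i ↦ convex_homogenizedHull) hind hx.mem hy.mem (by simp [hxy0])
  ext1 i
  by_contra hi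
  refine conormal_ne_zero (b := b) (hind x hx.mem)
    (eq_zero_of_affineSpan_eq_top_s9 (hspan i) fun p hp ↦ ?_)
  have hσp := hx.nonneg i _ (mk_one_mem_homogenizedHull hp)
  have hτp := hy.nonneg i _ (mk_one_mem_homogenizedHull hp)
  rw [← hcxy, LinearMap.smul_apply, smul_eq_mul, ← mul_smul_comm,
    mul_nonneg_iff_of_pos_left hc] at hτp
  exact eq_zero_of_units_smul_nonneg hi hσp hτp

theorem IsSupportingTransversal_s9.conormalHyperplane_eq
    (hind : ∀ z ∈ univ.pi fun i ↦ homogenizedHull (C i), LinearIndependent ℝ z)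
    (hx : IsSupportingTransversal_s9 b (fun i ↦ homogenizedHull (C i)) σ x)
    (hy : IsSupportingTransversal_s9 b (fun i ↦ homogenizedHull (C i)) σ y) :
    conormalHyperplane b x = conormalHyperplane b y := by
  obtain ⟨c, hc, hcxy⟩ : ∃ c : ℝ, 0 < c ∧ c • conormal b x = conormal b y :=
    exists_pos_smul_conormal_eq (fun i ↦ convex_homogenizedHull) hind hx.mem hy.mem fun i ↦
      mul_nonneg_of_units_smul_nonneg (σ i) (hx.nonneg i _ (hy.mem i trivial))
        (hy.nonneg i _ (hx.mem i trivial))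
  simp [conormalHyperplane, ← hcxy, hc.ne']

theorem exists_apply_eq_inner_sub [FiniteDimensional ℝ E] (φ : Dual ℝ (ℝ × E)) :
    ∃ (u : E) (α : ℝ), ∀ p, φ (1, p) = ⟪u, p⟫_ℝ - α := by
  refine ⟨(InnerProductSpace.toDual ℝ E).symm (φ ∘ₗ LinearMap.inr ℝ ℝ E).toContinuousLinearMap,
    -φ (1, 0), fun p ↦ ?_⟩
  rw [apply_one_eq_add_apply_inr, InnerProductSpace.toDual_symm_apply, sub_neg_eq_add, add_comm]

theorem isCommonTangent_iff_exists_dual [FiniteDimensional ℝ E] {ι : Type*} [Nonempty ι]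
    {C : ι → Set E} {H : Set E} :
    IsCommonTangent C H ↔ ∃ φ : Dual ℝ (ℝ × E), φ ≠ 0 ∧ H = {p | φ (1, p) = 0} ∧
      ∀ i, (∃ p ∈ C i, φ (1, p) = 0) ∧ ∃ s : ℤˣ, ∀ p ∈ C i, 0 ≤ s • φ (1, p) := by
  have htangent {u : E} {α : ℝ} {φ : Dual ℝ (ℝ × E)} (hφ : ∀ p, φ (1, p) = ⟪u, p⟫_ℝ - α) (i : ι) :
    (({x | ⟪u, x⟫_ℝ = α} ∩ C i).Nonempty ∧
      (C i ⊆ {x | α ≤ ⟪u, x⟫_ℝ} ∨ C i ⊆ {x | ⟪u, x⟫_ℝ ≤ α})) ↔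
    ((∃ p ∈ C i, φ (1, p) = 0) ∧ ∃ s : ℤˣ, ∀ p ∈ C i, 0 ≤ s • φ (1, p)) := by
    simp [exists_units_smul_nonneg_iff, hφ, sub_eq_zero, Set.Nonempty, subset_def, and_comm]
  constructor
  · rintro ⟨u, α, hu, rfl, h⟩
    let φ : Dual ℝ (ℝ × E) := (-α • LinearMap.id).coprod (innerₗ E u)
    have hφ (p : E) : φ (1, p) = ⟪u, p⟫_ℝ - α := by simp [φ, sub_eq_neg_add]
    refine ⟨φ, fun h0 ↦ hu ?_, by simp [hφ, sub_eq_zero], fun i ↦ (htangent hφ i).1 (h i)⟩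
    simpa [φ] using DFunLike.congr_fun h0 (0, u)
  · rintro ⟨φ, hφ0, rfl, h⟩
    obtain ⟨u, α, hφ⟩ := exists_apply_eq_inner_sub φ
    refine ⟨u, α, fun hu ↦ hφ0 ?_, by simp [hφ, sub_eq_zero], fun i ↦ ?_⟩
    · obtain ⟨p, -, hp⟩ := (h (Classical.arbitrary ι)).1
      have hα : α = 0 := by simpa [hu, hφ] using hp
      exact eq_zero_of_affineSpan_eq_top_s9 (AffineSubspace.span_univ ℝ E E) fun q _ ↦ by
        simp [hφ, hu, hα]
    · simpa [hφ, sub_eq_zero] using (htangent hφ i).2 (h i)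

theorem isCommonTangent_iff_exists_isSupportingTransversal [FiniteDimensional ℝ E] [NeZero d]
    (hcomp : ∀ i, IsCompact (C i))
    (hind : ∀ z ∈ univ.pi fun i ↦ homogenizedHull (C i), LinearIndependent ℝ z) {H : Set E} :
    IsCommonTangent C H ↔ ∃ σ x, IsSupportingTransversal_s9 b (fun i ↦ homogenizedHull (C i)) σ x ∧
      H = conormalHyperplane b x := by
  rw [isCommonTangent_iff_exists_dual]
  constructor
  · rintro ⟨φ, hφ0, rfl, h⟩
    choose p hpC hφp using fun i ↦ (h i).1
    have hmem : (fun i ↦ (1, p i)) ∈ univ.pi fun i ↦ homogenizedHull (C i) :=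
      fun i _ ↦ mk_one_mem_homogenizedHull (hpC i)
    obtain ⟨c, rfl⟩ := exists_eq_smul_conormal (b := b) (hind _ hmem) hφp
    have hc : c ≠ 0 := fun hc ↦ hφ0 (by simp [hc])
    choose σ hσ using fun i ↦ exists_units_smul_nonneg_of_mul hc (h i).2
    exact ⟨σ, _, ⟨hmem, fun i z hz ↦
      apply_nonneg_of_mem_homogenizedHull (φ := σ i • conormal b _) (hσ i) hz⟩,
      by simp [conormalHyperplane, hc]⟩
  · rintro ⟨σ, x, hx, rfl⟩
    have hσ (i : Fin d) (p : E) (hp : p ∈ C i) : 0 ≤ σ i • conormal b x (1, p) :=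
      hx.nonneg i _ (mk_one_mem_homogenizedHull hp)
    refine ⟨conormal b x, conormal_ne_zero (hind x hx.mem), rfl, fun i ↦ ⟨?_, σ i, hσ i⟩⟩
    by_contra! hne
    have hpos : 0 < (σ i • conormal b x) (x i) :=
      apply_pos_of_mem_homogenizedHull (hcomp i) (fun p hp ↦ (hσ i p hp).lt_of_ne'
        ((smul_ne_zero_iff_ne (σ i)).2 (hne p hp))) (hx.mem i trivial)
    simp at hpos

theorem compact_sets_total_count_general [FiniteDimensional ℝ E] [NeZero d] (hd : finrank ℝ E = d)
    (hcomp : ∀ i, IsCompact (C i)) (hspan : ∀ i, affineSpan ℝ (C i) = ⊤)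
    (hind : ∀ p ∈ univ.pi fun i ↦ closedConvexHull ℝ (C i), AffineIndependent ℝ p) :
    {H | IsCommonTangent C H}.encard = 2 ^ d := by
  let b : Basis (Fin (d + 1)) ℝ (ℝ × E) := finBasisOfFinrankEq ℝ (ℝ × E) (by simp [hd, add_comm])
  have hlin (z) (hz : z ∈ univ.pi fun i ↦ homogenizedHull (C i)) : LinearIndependent ℝ z :=
    linearIndependent_of_mem_pi_homogenizedHull hind hz
  have hne (i : Fin d) : (homogenizedHull (C i)).Nonempty := by
    obtain ⟨p, hp⟩ := AffineSubspace.nonempty_of_affineSpan_eq_top ℝ E E (hspan i)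
    exact ⟨_, mk_one_mem_homogenizedHull hp⟩
  choose x hx using exists_isSupportingTransversal_s9 (b := b) (fun i ↦ convex_homogenizedHull)
    (fun i ↦ isCompact_homogenizedHull (hcomp i)) hne hlin
  have hrange : {H | IsCommonTangent C H} = range fun σ ↦ conormalHyperplane b (x σ) := by
    ext H
    rw [mem_ofPred_eq, isCommonTangent_iff_exists_isSupportingTransversal (b := b) hcomp hlin]
    constructor
    · rintro ⟨σ, y, hy, rfl⟩
      exact ⟨σ, (hx σ).conormalHyperplane_eq hlin hy⟩
    · rintro ⟨σ, rfl⟩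
      exact ⟨σ, x σ, hx σ, rfl⟩
  have hinj : Function.Injective fun σ ↦ conormalHyperplane b (x σ) := fun σ τ h ↦
    (hx σ).eq_of_conormalHyperplane_eq hspan hlin (hx τ) h
  rw [hrange, ← image_univ, hinj.encard_image, encard_univ]
  simp

end CommonTangent

/-- A strongly separated family of `d` compact sets in `ℝ^d`, each with full-dimensional
convex hull, has exactly `2^d` common tangent affine hyperplanes. -/
theorem compact_sets_total_count {d : ℕ}
    (C : Fin d → Set (EuclideanSpace ℝ (Fin d)))
    (hcomp : ∀ i, IsCompact (C i))
    (hfull : ∀ i, (interior (convexHull ℝ (C i))).Nonempty)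
    (hsep : StronglySeparated C) :
    {H : Set (EuclideanSpace ℝ (Fin d)) | ∃ (u : EuclideanSpace ℝ (Fin d)) (α : ℝ),
        u ≠ 0 ∧ H = {x | ⟪u, x⟫_ℝ = α} ∧
        ∀ i : Fin d, (H ∩ C i).Nonempty ∧
          (C i ⊆ {x | α ≤ ⟪u, x⟫_ℝ} ∨ C i ⊆ {x | ⟪u, x⟫_ℝ ≤ α})}.encard = 2 ^ d := by
  have := hsep.neZero
  exact compact_sets_total_count_general finrank_euclideanSpace_fin hcomp
    (fun i ↦ interior_convexHull_nonempty_iff_affineSpan_eq_top.1 (hfull i))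
    fun p hp ↦ (hsep.closedConvexHull hcomp).affineIndependent_s9 hp
end
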